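/- arXiv:0811.0359 — 4 statements merged into one kernel-verified Lean document; each statement's English description precedes it below -/
import Mathlib

section
/- For every disjunctive logic program P and X ∈ {E,A}, τ(P) ≡ˣ_oga τ'(P) for all τ, τ' ∈ {τ^∨_HP, τ^∨_EB, τ^∨_EH}; and if P is normal, then τ(P) ≡ˣ_oga τ'(P) for all τ, τ' ∈ {τ_HP, τ_EB, τ_EH, τ^∨_HP, τ^∨_EB, τ^∨_EH}. -/
set_option autoImplicit false

/-! # First-order autoepistemic logic (FO-AEL): syntax -/

structure Sig : Type 1 where
  Func : Type
  Pred : Type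
  arF : Func → ℕ
  arP : Pred → ℕ

inductive Term (S : Sig) : Type
  | var : ℕ → Term S
  | func : (f : S.Func) → (Fin (S.arF f) → Term S) → Term S

inductive Formula (S : Sig) : Type
  | atom : (p : S.Pred) → (Fin (S.arP p) → Term S) → Formula S
  | eq : Term S → Term S → Formula S
  | not : Formula S → Formula S
  | and : Formula S → Formula S → Formula S
  | ex : ℕ → Formula S → Formula S
  | box : Formula S → Formula S

namespace Term

variable {S : Sig}

/-- A term is ground if it contains no variables; ground terms are the *names*. -/
def isGround : Term S → Prop
  | var _ => False
  | func _ ts => ∀ i, (ts i).isGround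

def hasVar (x : ℕ) : Term S → Prop
  | var y => y = x
  | func _ ts => ∃ i, (ts i).hasVar x

/-- Application of a partial (name) substitution to a term. -/
def subst (β : ℕ → Option (Term S)) : Term S → Term S
  | var x => (β x).getD (var x)
  | func f ts => func f (fun i => (ts i).subst β)

/-- The function symbols occurring in a term. -/
def funcs : Term S → Set S.Func
  | var _ => ∅
  | func f ts => insert f (⋃ i, (ts i).funcs)

/-- `t` is a name (ground term) over the set `F` of function symbols. -/
def isNameOf (F : Set S.Func) : Term S → Prop
  | var _ => False
  | func f ts => f ∈ F ∧ ∀ i, (ts i).isNameOf F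

end Term

namespace Formula

variable {S : Sig}

/-- A formula is objective if it is 𝖫-free. -/
def isObjective : Formula S → Prop
  | atom _ _ => True
  | eq _ _ => True
  | not φ => φ.isObjective
  | and φ ψ => φ.isObjective ∧ ψ.isObjective
  | ex _ φ => φ.isObjective
  | box _ => False

def isGround : Formula S → Prop
  | atom _ ts => ∀ i, (ts i).isGround
  | eq t₁ t₂ => t₁.isGround ∧ t₂.isGround
  | not φ => φ.isGround
  | and φ ψ => φ.isGround ∧ ψ.isGround
  | ex _ _ => False
  | box φ => φ.isGround

def isAtomic : Formula S → Prop
  | atom _ _ => True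
  | eq _ _ => True
  | not _ => False
  | and _ _ => False
  | ex _ _ => False
  | box _ => False

/-- The modal operator 𝖫 occurs only applied to (objective) atomic formulas. -/
def boxAtomic : Formula S → Prop
  | atom _ _ => True
  | eq _ _ => True
  | not φ => φ.boxAtomic
  | and φ ψ => φ.boxAtomic ∧ ψ.boxAtomic
  | ex _ φ => φ.boxAtomic
  | box φ => φ.isAtomic

/-- Propositional formulas: built from 0-ary predicates only. -/
def isPropositional : Formula S → Prop
  | atom p _ => S.arP p = 0
  | eq _ _ => False
  | not φ => φ.isPropositional
  | and φ ψ => φ.isPropositional ∧ ψ.isPropositional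
  | ex _ _ => False
  | box _ => False

def freeIn (x : ℕ) : Formula S → Prop
  | atom _ ts => ∃ i, (ts i).hasVar x
  | eq t₁ t₂ => t₁.hasVar x ∨ t₂.hasVar x
  | not φ => φ.freeIn x
  | and φ ψ => φ.freeIn x ∨ ψ.freeIn x
  | ex y φ => x ≠ y ∧ φ.freeIn x
  | box φ => φ.freeIn x

/-- A formula is closed (a sentence) if it has no free variables. -/
def closed (φ : Formula S) : Prop := ∀ x, ¬ φ.freeIn x

/-- Capture-avoiding application of a partial name substitution (values are ground). -/
def subst (β : ℕ → Option (Term S)) : Formula S → Formula S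
  | atom p ts => atom p (fun i => (ts i).subst β)
  | eq t₁ t₂ => eq (t₁.subst β) (t₂.subst β)
  | not φ => not (φ.subst β)
  | and φ ψ => and (φ.subst β) (ψ.subst β)
  | ex y φ => ex y (φ.subst (fun z => if z = y then none else β z))
  | box φ => box (φ.subst β)

def funcs : Formula S → Set S.Func
  | atom _ ts => ⋃ i, (ts i).funcs
  | eq t₁ t₂ => t₁.funcs ∪ t₂.funcs
  | not φ => φ.funcs
  | and φ ψ => φ.funcs ∪ ψ.funcs
  | ex _ φ => φ.funcs
  | box φ => φ.funcs

def preds : Formula S → Set S.Pred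
  | atom p _ => {p}
  | eq _ _ => ∅
  | not φ => φ.preds
  | and φ ψ => φ.preds ∪ ψ.preds
  | ex _ φ => φ.preds
  | box φ => φ.preds

/-- `φ ∨ ψ` as an abbreviation: `¬(¬φ ∧ ¬ψ)`. -/
def or (φ ψ : Formula S) : Formula S := not (and (not φ) (not ψ))

/-- `φ ⊃ ψ` as an abbreviation: `¬(φ ∧ ¬ψ)`. -/
def imp (φ ψ : Formula S) : Formula S := not (and φ (not ψ))

/-- `∀x.φ` as an abbreviation: `¬∃x.¬φ`. -/
def all (x : ℕ) (φ : Formula S) : Formula S := not (ex x (not φ))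

end Formula

/-! ## Semantics -/

structure Interp (S : Sig) where
  U : Type
  nonempty : Nonempty U
  interpF : (f : S.Func) → (Fin (S.arF f) → U) → U
  interpP : (p : S.Pred) → (Fin (S.arP p) → U) → Prop

noncomputable def Interp.dflt {S : Sig} (w : Interp S) : w.U := Classical.choice w.nonempty

def Term.eval {S : Sig} (w : Interp S) (B : ℕ → w.U) : Term S → w.U
  | Term.var x => B x
  | Term.func f ts => w.interpF f (fun i => (ts i).eval w B)

/-- Evaluation of a ground term (the assignment is irrelevant). -/
noncomputable def Term.evalG {S : Sig} (w : Interp S) (t : Term S) : w.U :=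
  t.eval w (fun _ => w.dflt)

/-- An individual is named if some name (ground term) denotes it. -/
def IsNamed {S : Sig} (w : Interp S) (k : w.U) : Prop :=
  ∃ t : Term S, t.isGround ∧ Term.evalG w t = k

/-- A name substitution `β` is associated with the variable assignment `B`:
its domain is exactly the set of variables whose `B`-value is named, and
it assigns to each such variable a name denoting its `B`-value. -/
def Assoc {S : Sig} (w : Interp S) (B : ℕ → w.U) (β : ℕ → Option (Term S)) : Prop :=
  ∀ x : ℕ,
    (IsNamed w (B x) → (β x).isSome) ∧
    (∀ t : Term S, β x = some t → t.isGround ∧ Term.evalG w t = B x)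

/-- The two semantics: any-name (E) and all-name (A). -/
inductive Sem : Type
  | any
  | all

/-- Satisfaction of a formula in an autoepistemic interpretation `⟨w,Γ⟩`
under a variable assignment, for the any-name (E) resp. all-name (A) semantics. -/
def Sat {S : Sig} (X : Sem) (w : Interp S) (Γ : Set (Formula S)) :
    Formula S → (ℕ → w.U) → Prop
  | Formula.atom p ts, B => w.interpP p (fun i => (ts i).eval w B)
  | Formula.eq t₁ t₂, B => t₁.eval w B = t₂.eval w B
  | Formula.not φ, B => ¬ Sat X w Γ φ B
  | Formula.and φ ψ, B => Sat X w Γ φ B ∧ Sat X w Γ ψ B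
  | Formula.ex x φ, B => ∃ u : w.U, Sat X w Γ φ (Function.update B x u)
  | Formula.box φ, B =>
      match X with
      | Sem.any => ∃ β, Assoc w B β ∧ (φ.subst β).closed ∧ φ.subst β ∈ Γ
      | Sem.all => ∀ β, Assoc w B β → (φ.subst β).closed ∧ φ.subst β ∈ Γ

def ModelsF {S : Sig} (X : Sem) (w : Interp S) (Γ : Set (Formula S)) (φ : Formula S) : Prop :=
  ∀ B : ℕ → w.U, Sat X w Γ φ B

def ModelsT {S : Sig} (X : Sem) (w : Interp S) (Γ Φ : Set (Formula S)) : Prop :=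
  ∀ φ ∈ Φ, ModelsF X w Γ φ

/-- `Φ ⊨ˣ_Γ φ`. -/
def Entails {S : Sig} (X : Sem) (Φ Γ : Set (Formula S)) (φ : Formula S) : Prop :=
  ∀ w : Interp S, ModelsT X w Γ Φ → ModelsF X w Γ φ

/-- The standard names assumption: all names are interpreted distinctly
and every individual is named. -/
def SNA {S : Sig} (w : Interp S) : Prop :=
  (∀ t₁ t₂ : Term S, t₁.isGround → t₂.isGround → Term.evalG w t₁ = Term.evalG w t₂ → t₁ = t₂) ∧
  (∀ k : w.U, IsNamed w k)

/-- Entailment restricted to interpretations satisfying the standard names assumption. -/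
def EntailsSN {S : Sig} (X : Sem) (Φ Γ : Set (Formula S)) (φ : Formula S) : Prop :=
  ∀ w : Interp S, SNA w → ModelsT X w Γ Φ → ModelsF X w Γ φ

/-- `T` is a stableˣ expansion of `Φ`. -/
def StableExp {S : Sig} (X : Sem) (Φ T : Set (Formula S)) : Prop :=
  T = {φ | Entails X Φ T φ}

def objOf {S : Sig} (T : Set (Formula S)) : Set (Formula S) :=
  {φ ∈ T | φ.isObjective}

def ogOf {S : Sig} (T : Set (Formula S)) : Set (Formula S) :=
  {φ ∈ T | φ.isObjective ∧ φ.isGround}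

def ogaOf {S : Sig} (T : Set (Formula S)) : Set (Formula S) :=
  {φ ∈ T | φ.isObjective ∧ φ.isGround ∧ φ.isAtomic}

def Consistent {S : Sig} (T : Set (Formula S)) : Prop := T ≠ Set.univ

/-- `Φ₁ ≡ˣ Φ₂`: same stableˣ expansions. -/
def ExpEquiv {S : Sig} (X : Sem) (Φ₁ Φ₂ : Set (Formula S)) : Prop :=
  ∀ T, StableExp X Φ₁ T ↔ StableExp X Φ₂ T

/-- `Φ₁ ≡ˣ_γ Φ₂` for a selector `sel` (e.g. `ogaOf`): the stableˣ expansions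
correspond with respect to `sel`. -/
def ExpEquivSel {S : Sig} (X : Sem) (sel : Set (Formula S) → Set (Formula S))
    (Φ₁ Φ₂ : Set (Formula S)) : Prop :=
  (∀ T, StableExp X Φ₁ T → ∃ T', StableExp X Φ₂ T' ∧ sel T = sel T') ∧
  (∀ T', StableExp X Φ₂ T' → ∃ T, StableExp X Φ₁ T ∧ sel T = sel T')

/-- Autoepistemicˣ consequences of `Φ`. -/
def Cn {S : Sig} (X : Sem) (Φ : Set (Formula S)) : Set (Formula S) :=
  {φ | ∀ T, StableExp X Φ T → φ ∈ T}

def CnO {S : Sig} (X : Sem) (Φ : Set (Formula S)) : Set (Formula S) :=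
  {φ ∈ Cn X Φ | φ.isObjective}

def CnOg {S : Sig} (X : Sem) (Φ : Set (Formula S)) : Set (Formula S) :=
  {φ ∈ Cn X Φ | φ.isObjective ∧ φ.isGround}

/-! ## Logic programs -/

structure PAtom (S : Sig) where
  p : S.Pred
  args : Fin (S.arP p) → Term S

namespace PAtom

variable {S : Sig}

def toFormula (a : PAtom S) : Formula S := Formula.atom a.p a.args

def isGround (a : PAtom S) : Prop := ∀ i, (a.args i).isGround

def hasVar (x : ℕ) (a : PAtom S) : Prop := ∃ i, (a.args i).hasVar x

def substA (σ : ℕ → Term S) (a : PAtom S) : PAtom S :=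
  ⟨a.p, fun i => (a.args i).subst (fun x => some (σ x))⟩

def funcs (a : PAtom S) : Set S.Func := ⋃ i, (a.args i).funcs

end PAtom

/-- A (disjunctive) rule `h₁ | … | h_l ← b₁,…,b_m, not c₁,…,not c_n`,
together with a list of the variables occurring in it. -/
structure Rule (S : Sig) where
  head : List (PAtom S)
  pos : List (PAtom S)
  neg : List (PAtom S)
  vars : List ℕ

namespace Rule

variable {S : Sig}

def atoms (r : Rule S) : List (PAtom S) := r.head ++ r.pos ++ r.neg

def hasVar (x : ℕ) (r : Rule S) : Prop := ∃ a ∈ r.atoms, PAtom.hasVar x a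

/-- Well-formedness: at least one head atom, and `vars` lists all variables of the rule. -/
def wf (r : Rule S) : Prop := r.head ≠ [] ∧ ∀ x, r.hasVar x → x ∈ r.vars

def isNormal (r : Rule S) : Prop := r.head.length = 1

def isGround (r : Rule S) : Prop := (∀ a ∈ r.atoms, a.isGround) ∧ r.vars = []

def isSafe (r : Rule S) : Prop := ∀ x, r.hasVar x → ∃ a ∈ r.pos, PAtom.hasVar x a

def isPositive (r : Rule S) : Prop := r.neg = []

def applySubst (σ : ℕ → Term S) (r : Rule S) : Rule S :=
  ⟨r.head.map (PAtom.substA σ), r.pos.map (PAtom.substA σ), r.neg.map (PAtom.substA σ), []⟩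

end Rule

abbrev Program (S : Sig) := Set (Rule S)

def progWf {S : Sig} (P : Program S) : Prop := ∀ r ∈ P, r.wf
def progNormal {S : Sig} (P : Program S) : Prop := ∀ r ∈ P, r.isNormal
def progGround {S : Sig} (P : Program S) : Prop := ∀ r ∈ P, r.isGround
def progSafe {S : Sig} (P : Program S) : Prop := ∀ r ∈ P, r.isSafe
def progPositive {S : Sig} (P : Program S) : Prop := ∀ r ∈ P, r.isPositive

/-- The function symbols occurring in `P` (part of the signature `Σ_P`). -/
def progFuncs {S : Sig} (P : Program S) : Set S.Func :=
  {f | ∃ r ∈ P, ∃ a ∈ r.atoms, f ∈ a.funcs}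

/-- The predicate symbols occurring in `P` (part of the signature `Σ_P`). -/
def progPreds {S : Sig} (P : Program S) : Set S.Pred :=
  {q | ∃ r ∈ P, ∃ a ∈ r.atoms, a.p = q}

/-- The ambient signature is exactly the signature `Σ_P` of `P`. -/
def fullSig {S : Sig} (P : Program S) : Prop :=
  (∀ f : S.Func, f ∈ progFuncs P) ∧ (∀ q : S.Pred, q ∈ progPreds P)

/-- Standing assumption: `Σ_P` contains a 0-ary function symbol whenever it
has a predicate symbol of arity greater than 0. -/
def goodSig {S : Sig} (P : Program S) : Prop :=
  (∃ q ∈ progPreds P, 0 < S.arP q) → ∃ f ∈ progFuncs P, S.arF f = 0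

/-! ## Embeddings of logic programs into FO-AEL -/

def andAll {S : Sig} : Formula S → List (Formula S) → Formula S
  | φ, [] => φ
  | φ, ψ :: rest => andAll (Formula.and φ ψ) rest

def orAll {S : Sig} : Formula S → List (Formula S) → Formula S
  | φ, [] => φ
  | φ, ψ :: rest => orAll (Formula.or φ ψ) rest

/-- `impOf ants c` is `⋀ ants ⊃ c` (just `c` if there are no antecedents). -/
def impOf {S : Sig} : List (Formula S) → Formula S → Formula S
  | [], c => c
  | a :: rest, c => Formula.imp (andAll a rest) c

/-- Disjunction of a nonempty list (junk value on the empty list,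
which is excluded by rule well-formedness). -/
def disjOf {S : Sig} : List (Formula S) → Formula S
  | [] => Formula.eq (Term.var 0) (Term.var 0)
  | h :: rest => orAll h rest

/-- Universal uclosure over the listed variables. -/
def uclosure {S : Sig} (vs : List ℕ) (φ : Formula S) : Formula S :=
  vs.foldr Formula.all φ

def bodyHP {S : Sig} (r : Rule S) : List (Formula S) :=
  r.pos.map PAtom.toFormula ++ r.neg.map (fun c => Formula.not (Formula.box c.toFormula))

def bodyE {S : Sig} (r : Rule S) : List (Formula S) :=
  r.pos.map (fun b => Formula.and b.toFormula (Formula.box b.toFormula)) ++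
    r.neg.map (fun c => Formula.not (Formula.box c.toFormula))

/-- `τ_HP(r)` resp. `τ^∨_HP(r)`. -/
def embHP {S : Sig} (r : Rule S) : Formula S :=
  uclosure r.vars (impOf (bodyHP r) (disjOf (r.head.map PAtom.toFormula)))

/-- `τ_EB(r)` resp. `τ^∨_EB(r)`. -/
def embEB {S : Sig} (r : Rule S) : Formula S :=
  uclosure r.vars (impOf (bodyE r) (disjOf (r.head.map PAtom.toFormula)))

/-- `τ_EH(r)` resp. `τ^∨_EH(r)`. -/
def embEH {S : Sig} (r : Rule S) : Formula S :=
  uclosure r.vars (impOf (bodyE r)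
    (disjOf (r.head.map (fun h => Formula.and h.toFormula (Formula.box h.toFormula)))))

/-- The unique-names axioms `¬𝖫(t₁=t₂) ⊃ t₁≠t₂` for distinct names of `Σ_P`. -/
def UNAax {S : Sig} (P : Program S) : Set (Formula S) :=
  {φ | ∃ t₁ t₂ : Term S, t₁.isNameOf (progFuncs P) ∧ t₂.isNameOf (progFuncs P) ∧ t₁ ≠ t₂ ∧
        φ = Formula.imp (Formula.not (Formula.box (Formula.eq t₁ t₂)))
              (Formula.not (Formula.eq t₁ t₂))}

/-- The positive introspection axioms `α ⊃ 𝖫α` for objective ground atoms of `Σ_P`. -/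
def PIAax {S : Sig} (P : Program S) : Set (Formula S) :=
  {φ | ∃ a : PAtom S, a.p ∈ progPreds P ∧ (∀ i, (a.args i).isNameOf (progFuncs P)) ∧
        φ = Formula.imp a.toFormula (Formula.box a.toFormula)}

def ruleEmb {S : Sig} (emb : Rule S → Formula S) (P : Program S) : Set (Formula S) :=
  {φ | ∃ r ∈ P, φ = emb r}

def tauHP {S : Sig} (P : Program S) : Set (Formula S) := ruleEmb embHP P ∪ UNAax P
def tauEB {S : Sig} (P : Program S) : Set (Formula S) := ruleEmb embEB P ∪ UNAax P
def tauEH {S : Sig} (P : Program S) : Set (Formula S) := ruleEmb embEH P ∪ UNAax P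
def tauHPv {S : Sig} (P : Program S) : Set (Formula S) := ruleEmb embHP P ∪ PIAax P ∪ UNAax P
def tauEBv {S : Sig} (P : Program S) : Set (Formula S) := ruleEmb embEB P ∪ PIAax P ∪ UNAax P
def tauEHv {S : Sig} (P : Program S) : Set (Formula S) := ruleEmb embEH P ∪ UNAax P
def tauHPminus {S : Sig} (P : Program S) : Set (Formula S) := ruleEmb embHP P
def tauEHvminus {S : Sig} (P : Program S) : Set (Formula S) := ruleEmb embEH P

/-! ## Grounding and stable models -/

/-- The grounding of `P`: all ground instantiations of rules of `P`
obtained by replacing variables with names of `Σ_P`. -/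
def grP {S : Sig} (P : Program S) : Program S :=
  {r' | ∃ r ∈ P, ∃ σ : ℕ → Term S,
        (∀ x, r.hasVar x → (σ x).isNameOf (progFuncs P)) ∧ r' = Rule.applySubst σ r}

/-- A Herbrand interpretation: a set of ground atomic formulas. -/
def HerbrandI {S : Sig} (M : Set (Formula S)) : Prop :=
  ∀ φ ∈ M, φ.isAtomic ∧ φ.isGround

/-- `M` is a Herbrand model of the positive ground program `Q` (relative to the
names of `Σ_P`): rules are satisfied and `t = t ∈ M` for every name `t`. -/
def HerbrandModelOf {S : Sig} (P Q : Program S) (M : Set (Formula S)) : Prop :=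
  HerbrandI M ∧
  (∀ r ∈ Q, (∀ b ∈ r.pos, PAtom.toFormula b ∈ M) → ∃ h ∈ r.head, PAtom.toFormula h ∈ M) ∧
  (∀ t : Term S, t.isNameOf (progFuncs P) → Formula.eq t t ∈ M)

/-- The Gelfond–Lifschitz reduct of `gr(P)` with respect to `M`. -/
def reduct {S : Sig} (P : Program S) (M : Set (Formula S)) : Program S :=
  {r' | ∃ r ∈ grP P, (∀ c ∈ r.neg, PAtom.toFormula c ∉ M) ∧
        r' = ⟨r.head, r.pos, [], r.vars⟩}

/-- `M` is a stable model of `P`: a minimal Herbrand model of the reduct of `gr(P)` w.r.t. `M`. -/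
def isStableModel {S : Sig} (P : Program S) (M : Set (Formula S)) : Prop :=
  HerbrandModelOf P (reduct P M) M ∧
  ∀ M', M' ⊆ M → HerbrandModelOf P (reduct P M) M' → M' = M

/-! ## First-order theories and classes thereof -/

/-- An FO theory: a set of objective sentences. -/
def FOTheory {S : Sig} (Φ : Set (Formula S)) : Prop :=
  ∀ φ ∈ Φ, φ.isObjective ∧ φ.closed

def theoryFuncs {S : Sig} (Φ : Set (Formula S)) : Set S.Func := {f | ∃ φ ∈ Φ, f ∈ φ.funcs}
def theoryPreds {S : Sig} (Φ : Set (Formula S)) : Set S.Pred := {q | ∃ φ ∈ Φ, q ∈ φ.preds}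

/-- The ambient signature is exactly the union of the signatures of `Φ` and `P`. -/
def CoverSig {S : Sig} (Φ : Set (Formula S)) (P : Program S) : Prop :=
  (∀ f : S.Func, f ∈ theoryFuncs Φ ∪ progFuncs P) ∧
  (∀ q : S.Pred, q ∈ theoryPreds Φ ∪ progPreds P)

def exClosure {S : Sig} (ys : List ℕ) (φ : Formula S) : Formula S := ys.foldr Formula.ex φ

/-- A Horn sentence `(∀)(b₁ ∧ … ∧ b_n ⊃ h)` with atomic `b_i`, `h`
(the consequent `h` may be absent). -/
def isHornSentence {S : Sig} (φ : Formula S) : Prop :=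
  ∃ (vs : List ℕ) (bs : List (Formula S)),
    (∀ b ∈ bs, b.isAtomic) ∧
    ((∃ h : Formula S, h.isAtomic ∧ φ = uclosure vs (impOf bs h)) ∨
     (∃ b rest, bs = b :: rest ∧ φ = uclosure vs (Formula.not (andAll b rest))))

def HornTheory {S : Sig} (Φ : Set (Formula S)) : Prop :=
  FOTheory Φ ∧ ∀ φ ∈ Φ, isHornSentence φ

/-- A generalized Horn sentence `(∀)(b₁ ∧ … ∧ b_n ⊃ ∃ȳ.h)` with atomic `b_i`, `h`,
the variables `ȳ` occurring only in `h` (the consequent may be absent). -/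
def isGHornSentence {S : Sig} (φ : Formula S) : Prop :=
  ∃ (vs : List ℕ) (bs : List (Formula S)),
    (∀ b ∈ bs, b.isAtomic) ∧
    ((∃ (ys : List ℕ) (h : Formula S), h.isAtomic ∧
        (∀ y ∈ ys, ∀ b ∈ bs, ¬ b.freeIn y) ∧
        φ = uclosure vs (impOf bs (exClosure ys h))) ∨
     (∃ b rest, bs = b :: rest ∧ φ = uclosure vs (Formula.not (andAll b rest))))

def GHornTheory {S : Sig} (Φ : Set (Formula S)) : Prop :=
  FOTheory Φ ∧ ∀ φ ∈ Φ, isGHornSentence φ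

def PropTheory {S : Sig} (Φ : Set (Formula S)) : Prop :=
  FOTheory Φ ∧ ∀ φ ∈ Φ, φ.isPropositional


namespace Stmt5Aux

variable {S : Sig}

theorem ground_of_noVar (t : Term S) (h : ∀ x, ¬ t.hasVar x) : t.isGround := by
  induction t with
  | var y => exact h y rfl
  | func f ts ih => exact fun i => ih i (fun x hx => h x ⟨i, hx⟩)

theorem noVar_of_ground (t : Term S) (h : t.isGround) (x : ℕ) : ¬ t.hasVar x := by
  induction t with
  | var y => exact h.elim
  | func f ts ih => rintro ⟨i, hi⟩; exact ih i (h i) hi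

theorem ground_of_closed {φ : Formula S} (ha : φ.isAtomic) (h : φ.closed) : φ.isGround := by
  cases φ with
  | atom p ts => exact fun i => ground_of_noVar _ (fun x hx => h x ⟨i, hx⟩)
  | eq a b => exact ⟨ground_of_noVar _ (fun x hx => h x (Or.inl hx)),
      ground_of_noVar _ (fun x hx => h x (Or.inr hx))⟩
  | _ => exact ha.elim

theorem closed_of_ground {φ : Formula S} (ha : φ.isAtomic) (h : φ.isGround) : φ.closed := by
  intro x hx
  cases φ with
  | atom p ts => obtain ⟨i, hi⟩ := hx; exact noVar_of_ground _ (h i) x hi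
  | eq a b => rcases hx with hx | hx
              · exact noVar_of_ground _ h.1 x hx
              · exact noVar_of_ground _ h.2 x hx
  | _ => exact ha.elim

theorem obj_of_atomic {φ : Formula S} (ha : φ.isAtomic) : φ.isObjective := by
  cases φ <;> trivial

theorem boxAtomic_of_atomic {φ : Formula S} (ha : φ.isAtomic) : φ.boxAtomic := by
  cases φ <;> trivial

theorem atomic_subst {φ : Formula S} (ha : φ.isAtomic) (β : ℕ → Option (Term S)) :
    (φ.subst β).isAtomic := by
  cases φ <;> trivial

/-- box depth -/
def bd : Formula S → ℕ
  | .atom _ _ => 0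
  | .eq _ _ => 0
  | .not φ => bd φ
  | .and φ ψ => max (bd φ) (bd ψ)
  | .ex _ φ => bd φ
  | .box φ => bd φ + 1

theorem bd_subst (φ : Formula S) (β : ℕ → Option (Term S)) : bd (φ.subst β) = bd φ := by
  induction φ generalizing β with
  | atom p ts => rfl
  | eq a b => rfl
  | not φ ih => exact ih β
  | and φ ψ ih1 ih2 => simp [Formula.subst, bd, ih1, ih2]
  | ex y φ ih => simp [Formula.subst, bd, ih]
  | box φ ih => simp [Formula.subst, bd, ih]

theorem sat_congr_bd (X : Sem) (w : Interp S) (Γ Γ' : Set (Formula S)) (n : ℕ)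
    (h : ∀ ψ, bd ψ < n → (ψ ∈ Γ ↔ ψ ∈ Γ')) (φ : Formula S) (hφ : bd φ ≤ n) (B : ℕ → w.U) :
    Sat X w Γ φ B ↔ Sat X w Γ' φ B := by
  induction φ generalizing B with
  | atom p ts => exact Iff.rfl
  | eq a b => exact Iff.rfl
  | not φ ih => exact not_congr (ih hφ B)
  | and φ ψ ih1 ih2 =>
      exact and_congr (ih1 (le_trans (le_max_left _ _) hφ) B)
        (ih2 (le_trans (le_max_right _ _) hφ) B)
  | ex y φ ih => exact exists_congr fun u => ih hφ _
  | box φ ih =>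
      have hk : ∀ β, (φ.subst β ∈ Γ ↔ φ.subst β ∈ Γ') := fun β => h _ (by
        rw [bd_subst]; exact hφ)
      cases X with
      | any => simp only [Sat, hk]
      | all => simp only [Sat, hk]

theorem mem_oga {T : Set (Formula S)} {φ : Formula S} (ha : φ.isAtomic) :
    (φ.closed ∧ φ ∈ ogaOf T) ↔ (φ.closed ∧ φ ∈ T) := by
  constructor
  · rintro ⟨h, h1⟩; exact ⟨h, h1.1⟩
  · rintro ⟨h, h1⟩; exact ⟨h, h1, obj_of_atomic ha, ground_of_closed ha h, ha⟩

theorem sat_oga (X : Sem) (w : Interp S) (T : Set (Formula S))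
    (φ : Formula S) (hφ : φ.boxAtomic) (B : ℕ → w.U) :
    Sat X w (ogaOf T) φ B ↔ Sat X w T φ B := by
  induction φ generalizing B with
  | atom p ts => exact Iff.rfl
  | eq a b => exact Iff.rfl
  | not φ ih => exact not_congr (ih hφ B)
  | and φ ψ ih1 ih2 => exact and_congr (ih1 hφ.1 B) (ih2 hφ.2 B)
  | ex y φ ih => exact exists_congr fun u => ih hφ _
  | box φ ih =>
      have hk := fun β => mem_oga (T := T) (atomic_subst (φ := φ) hφ β)
      cases X with
      | any => simp only [Sat, hk]
      | all => simp only [Sat, hk]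

theorem modelsT_oga (X : Sem) (w : Interp S) (T Φ : Set (Formula S))
    (hΦ : ∀ φ ∈ Φ, φ.boxAtomic) : ModelsT X w (ogaOf T) Φ ↔ ModelsT X w T Φ := by
  constructor
  · intro h φ hφ B; exact (sat_oga X w T φ (hΦ φ hφ) B).1 (h φ hφ B)
  · intro h φ hφ B; exact (sat_oga X w T φ (hΦ φ hφ) B).2 (h φ hφ B)

theorem sat_atomic (X : Sem) (w : Interp S) (Γ Γ' : Set (Formula S))
    (φ : Formula S) (hφ : φ.isAtomic) (B : ℕ → w.U) :
    Sat X w Γ φ B ↔ Sat X w Γ' φ B := by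
  cases φ <;> first | exact Iff.rfl | exact hφ.elim

/-- Existence of belief sets for classes of interpretations. -/
def Tn (X : Sem) (C : Interp S → Prop) : ℕ → Set (Formula S)
  | 0 => ∅
  | k + 1 => {φ | ∀ w, C w → ModelsF X w (Tn X C k) φ}

theorem Tn_succ (X : Sem) (C : Interp S → Prop) (k : ℕ) :
    ∀ ψ : Formula S, bd ψ < k → (ψ ∈ Tn X C k ↔ ψ ∈ Tn X C (k+1)) := by
  induction k with
  | zero => intro ψ h; omega
  | succ k ih =>
      intro ψ h
      exact forall_congr' fun w => imp_congr_right fun _ => forall_congr' fun B =>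
        sat_congr_bd X w _ _ k ih ψ (by omega) B

theorem Tn_le (X : Sem) (C : Interp S → Prop) (k d : ℕ) :
    ∀ ψ : Formula S, bd ψ < k → (ψ ∈ Tn X C k ↔ ψ ∈ Tn X C (k+d)) := by
  intro ψ h
  induction d with
  | zero => exact Iff.rfl
  | succ d ih => exact ih.trans (Tn_succ X C (k+d) ψ (by omega))

theorem exists_belief (X : Sem) (C : Interp S → Prop) :
    ∃ T : Set (Formula S), ∀ φ, φ ∈ T ↔ ∀ w, C w → ModelsF X w T φ := by
  refine ⟨{φ | φ ∈ Tn X C (bd φ + 1)}, fun φ => ?_⟩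
  refine forall_congr' fun w => imp_congr_right fun _ => forall_congr' fun B =>
        sat_congr_bd X w _ _ (bd φ) (fun ψ hψ => ?_) φ le_rfl B
  obtain ⟨d, hd⟩ := Nat.exists_eq_add_of_lt hψ
  have := Tn_le X C (bd ψ + 1) d ψ (by omega)
  rw [show bd φ = bd ψ + 1 + d by omega]
  exact this.symm

def oga (φ : Formula S) : Prop := φ.isObjective ∧ φ.isGround ∧ φ.isAtomic

def Fix (X : Sem) (Φ A : Set (Formula S)) : Prop :=
  ∀ φ, φ ∈ A ↔ (oga φ ∧ ∀ w, ModelsT X w A Φ → ModelsF X w A φ)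

theorem fix_of_stable (X : Sem) (Φ T : Set (Formula S)) (hΦ : ∀ φ ∈ Φ, φ.boxAtomic)
    (h : StableExp X Φ T) : Fix X Φ (ogaOf T) := by
  intro φ
  have h1 : φ ∈ T ↔ Entails X Φ T φ := by
    constructor
    · intro h2; rw [h] at h2; exact h2
    · intro h2; rw [h]; exact h2
  constructor
  · rintro ⟨a, b⟩
    refine ⟨b, fun w hw B => ?_⟩
    rw [modelsT_oga X w T Φ hΦ] at hw
    exact (sat_atomic X w _ _ φ b.2.2 B).1 (h1.1 a w hw B)
  · rintro ⟨b, a⟩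
    refine ⟨h1.2 fun w hw B => ?_, b⟩
    rw [← modelsT_oga X w T Φ hΦ] at hw
    exact (sat_atomic X w _ _ φ b.2.2 B).1 (a w hw B)

theorem stable_of_fix (X : Sem) (Φ A : Set (Formula S)) (hΦ : ∀ φ ∈ Φ, φ.boxAtomic)
    (h : Fix X Φ A) : ∃ T, StableExp X Φ T ∧ A = ogaOf T := by
  obtain ⟨T, hT⟩ := exists_belief X (fun w => ModelsT X w A Φ)
  have hA : A = ogaOf T := by
    ext φ
    rw [h φ]
    constructor
    · rintro ⟨b, a⟩
      exact ⟨(hT φ).2 fun w hw B => (sat_atomic X w _ _ φ b.2.2 B).1 (a w hw B), b⟩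
    · rintro ⟨a, b⟩
      exact ⟨b, fun w hw B => (sat_atomic X w _ _ φ b.2.2 B).1 ((hT φ).1 a w hw B)⟩
  refine ⟨T, ?_, hA⟩
  ext φ
  rw [hT φ]
  refine forall_congr' fun w => ?_
  rw [hA, modelsT_oga X w T Φ hΦ]

theorem equiv_of_fix (X : Sem) (Φ Φ' : Set (Formula S)) (hΦ : ∀ φ ∈ Φ, φ.boxAtomic)
    (hΦ' : ∀ φ ∈ Φ', φ.boxAtomic) (h : ∀ A, Fix X Φ A ↔ Fix X Φ' A) :
    ExpEquivSel X ogaOf Φ Φ' := by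
  constructor
  · intro T hT
    exact stable_of_fix X Φ' _ hΦ' ((h _).1 (fix_of_stable X Φ T hΦ hT))
  · intro T hT
    obtain ⟨T', h1, h2⟩ := stable_of_fix X Φ _ hΦ ((h _).2 (fix_of_stable X Φ' T hΦ' hT))
    exact ⟨T', h1, h2.symm⟩

/-! ### connectives -/

theorem sat_andAll (X : Sem) (w : Interp S) (Γ : Set (Formula S)) (l : List (Formula S))
    (B : ℕ → w.U) (φ : Formula S) :
    Sat X w Γ (andAll φ l) B ↔ Sat X w Γ φ B ∧ ∀ a ∈ l, Sat X w Γ a B := by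
  induction l generalizing φ with
  | nil => simp [andAll]
  | cons ψ l ih => simp [andAll, ih, Sat, and_assoc]

theorem sat_orAll (X : Sem) (w : Interp S) (Γ : Set (Formula S)) (l : List (Formula S))
    (B : ℕ → w.U) (φ : Formula S) :
    Sat X w Γ (orAll φ l) B ↔ Sat X w Γ φ B ∨ ∃ a ∈ l, Sat X w Γ a B := by
  induction l generalizing φ with
  | nil => simp [orAll]
  | cons ψ l ih =>
    rw [orAll, ih]
    simp only [Formula.or, Sat, List.mem_cons, exists_eq_or_imp]
    tauto

theorem sat_imp (X : Sem) (w : Interp S) (Γ : Set (Formula S)) (B : ℕ → w.U)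
    (φ ψ : Formula S) :
    Sat X w Γ (φ.imp ψ) B ↔ (Sat X w Γ φ B → Sat X w Γ ψ B) := by
  simp only [Formula.imp, Sat]; tauto

theorem sat_impOf (X : Sem) (w : Interp S) (Γ : Set (Formula S)) (l : List (Formula S))
    (B : ℕ → w.U) (φ : Formula S) :
    Sat X w Γ (impOf l φ) B ↔ ((∀ a ∈ l, Sat X w Γ a B) → Sat X w Γ φ B) := by
  cases l with
  | nil => simp [impOf]
  | cons a l => simp [impOf, sat_imp, sat_andAll]

theorem sat_disjOf (X : Sem) (w : Interp S) (Γ : Set (Formula S)) (l : List (Formula S))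
    (hl : l ≠ []) (B : ℕ → w.U) :
    Sat X w Γ (disjOf l) B ↔ ∃ a ∈ l, Sat X w Γ a B := by
  cases l with
  | nil => exact (hl rfl).elim
  | cons a l => simp [disjOf, sat_orAll]

theorem models_uclosure (X : Sem) (w : Interp S) (Γ : Set (Formula S)) (vs : List ℕ)
    (φ : Formula S) : ModelsF X w Γ (uclosure vs φ) ↔ ModelsF X w Γ φ := by
  induction vs with
  | nil => exact Iff.rfl
  | cons x vs ih =>
    rw [← ih]
    constructor
    · intro h B
      have := h B
      simp only [uclosure, List.foldr, Formula.all, Sat, not_exists, not_not] at this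
      have h2 := this (B x)
      rwa [Function.update_eq_self] at h2
    · intro h B
      simp only [uclosure, List.foldr, Formula.all, Sat, not_exists, not_not]
      intro u
      exact h _

theorem ba_andAll (l : List (Formula S)) (φ : Formula S) (h : φ.boxAtomic)
    (hl : ∀ a ∈ l, a.boxAtomic) : (andAll φ l).boxAtomic := by
  induction l generalizing φ with
  | nil => exact h
  | cons ψ l ih =>
    exact ih _ ⟨h, hl _ (by simp)⟩ (fun a ha => hl a (by simp [ha]))

theorem ba_orAll (l : List (Formula S)) (φ : Formula S) (h : φ.boxAtomic)
    (hl : ∀ a ∈ l, a.boxAtomic) : (orAll φ l).boxAtomic := by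
  induction l generalizing φ with
  | nil => exact h
  | cons ψ l ih =>
    exact ih _ ⟨h, hl ψ (by simp)⟩ (fun a ha => hl a (by simp [ha]))

theorem ba_impOf (l : List (Formula S)) (φ : Formula S) (h : φ.boxAtomic)
    (hl : ∀ a ∈ l, a.boxAtomic) : (impOf l φ).boxAtomic := by
  cases l with
  | nil => exact h
  | cons ψ l =>
    exact ⟨ba_andAll _ _ (hl _ (by simp)) (fun a ha => hl a (by simp [ha])), h⟩

theorem ba_disjOf (l : List (Formula S))
    (hl : ∀ a ∈ l, a.boxAtomic) : (disjOf l).boxAtomic := by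
  cases l with
  | nil => trivial
  | cons ψ l =>
    exact ba_orAll _ _ (hl _ (by simp)) (fun a ha => hl a (by simp [ha]))

theorem ba_uclosure (vs : List ℕ) (φ : Formula S) (h : φ.boxAtomic) :
    (uclosure vs φ).boxAtomic := by
  induction vs with
  | nil => exact h
  | cons x vs ih => exact ih

/-! ### unified embedding -/

def lit : Bool → PAtom S → Formula S
  | true, a => Formula.and a.toFormula (Formula.box a.toFormula)
  | false, a => a.toFormula

def emb (eb eh : Bool) (r : Rule S) : Formula S :=
  uclosure r.vars (impOf (r.pos.map (lit eb) ++
    r.neg.map (fun c => Formula.not (Formula.box c.toFormula)))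
    (disjOf (r.head.map (lit eh))))

def Phi (eb eh pia : Bool) (P : Program S) : Set (Formula S) :=
  ruleEmb (emb eb eh) P ∪ {φ | pia = true ∧ φ ∈ PIAax P} ∪ UNAax P

theorem tauHP_eq (P : Program S) : tauHP P = Phi false false false P := by
  have : (embHP : Rule S → Formula S) = emb false false := rfl
  simp [tauHP, Phi, this]

theorem tauEB_eq (P : Program S) : tauEB P = Phi true false false P := by
  have : (embEB : Rule S → Formula S) = emb true false := rfl
  simp [tauEB, Phi, this]

theorem tauEH_eq (P : Program S) : tauEH P = Phi true true false P := by
  have : (embEH : Rule S → Formula S) = emb true true := rfl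
  simp [tauEH, Phi, this]

theorem tauHPv_eq (P : Program S) : tauHPv P = Phi false false true P := by
  have : (embHP : Rule S → Formula S) = emb false false := rfl
  simp [tauHPv, Phi, this]

theorem tauEBv_eq (P : Program S) : tauEBv P = Phi true false true P := by
  have : (embEB : Rule S → Formula S) = emb true false := rfl
  simp [tauEBv, Phi, this]

theorem tauEHv_eq (P : Program S) : tauEHv P = Phi true true false P := by
  have : (embEH : Rule S → Formula S) = emb true true := rfl
  simp [tauEHv, Phi, this]

theorem lit_ba (e : Bool) (a : PAtom S) : (lit e a).boxAtomic := by
  cases e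
  · trivial
  · exact ⟨trivial, trivial⟩

theorem Phi_ba (eb eh pia : Bool) (P : Program S) : ∀ φ ∈ Phi eb eh pia P, φ.boxAtomic := by
  rintro φ ((⟨r, _, rfl⟩ | ⟨_, a, _, _, rfl⟩) | ⟨t, t', _, _, _, rfl⟩)
  · refine ba_uclosure _ _ (ba_impOf _ _ (ba_disjOf _ ?_) ?_)
    · intro a ha
      obtain ⟨b, _, rfl⟩ := List.mem_map.1 ha
      exact lit_ba _ _
    · intro a ha
      rcases List.mem_append.1 ha with ha | ha
      · obtain ⟨b, _, rfl⟩ := List.mem_map.1 ha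
        exact lit_ba _ _
      · obtain ⟨b, _, rfl⟩ := List.mem_map.1 ha
        trivial
  · exact ⟨trivial, trivial⟩
  · exact ⟨trivial, trivial⟩

/-! ### terms and evaluation -/

theorem eval_ground (w : Interp S) (t : Term S) (h : t.isGround) (B B' : ℕ → w.U) :
    t.eval w B = t.eval w B' := by
  induction t with
  | var x => exact h.elim
  | func f ts ih => simp only [Term.eval]; congr 1; funext i; exact ih i (h i)

theorem eval_subst (w : Interp S) (t : Term S) (σ : ℕ → Term S) (B B' : ℕ → w.U)
    (hB : ∀ x, (σ x).eval w B' = B x) :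
    (t.subst (fun x => some (σ x))).eval w B' = t.eval w B := by
  induction t with
  | var x => exact hB x
  | func f ts ih => simp only [Term.subst, Term.eval]; congr 1; funext i; exact ih i

theorem eval_subst_opt (w : Interp S) (t : Term S) (β : ℕ → Option (Term S)) (B : ℕ → w.U)
    (hB : Assoc w B β) : (t.subst β).eval w B = t.eval w B := by
  induction t with
  | var x =>
    simp only [Term.subst]
    cases h : β x with
    | none => rfl
    | some s =>
      obtain ⟨h1, h2⟩ := (hB x).2 s h
      rw [Option.getD_some, eval_ground w s h1 B (fun _ => w.dflt)]
      exact h2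
  | func f ts ih => simp only [Term.subst, Term.eval]; congr 1; funext i; exact ih i

theorem ground_subst (t : Term S) (β : ℕ → Option (Term S))
    (h : ∀ x, ∃ s, β x = some s ∧ s.isGround) : (t.subst β).isGround := by
  induction t with
  | var x => obtain ⟨s, h1, h2⟩ := h x; simpa [Term.subst, h1] using h2
  | func f ts ih => exact fun i => ih i

theorem subst_ground (t : Term S) (β : ℕ → Option (Term S)) (h : t.isGround) :
    t.subst β = t := by
  induction t with
  | var x => exact h.elim
  | func f ts ih => simp only [Term.subst]; congr 1; funext i; exact ih i (h i)

theorem name_iff {F : Set S.Func} (hF : ∀ f, f ∈ F) (t : Term S) :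
    t.isNameOf F ↔ t.isGround := by
  induction t with
  | var x => exact Iff.rfl
  | func f ts ih => simp [Term.isNameOf, Term.isGround, hF, ih]

def prop (S : Sig) : Prop := ∀ p, S.arP p = 0

theorem dich (P : Program S) (hfull : fullSig P) (hgood : goodSig P) :
    (∃ t : Term S, t.isGround) ∨ prop S := by
  by_cases h : prop S
  · exact Or.inr h
  · left
    simp only [prop, not_forall] at h
    obtain ⟨p, hp⟩ := h
    obtain ⟨f, _, hf⟩ := hgood ⟨p, hfull.2 p, Nat.pos_of_ne_zero hp⟩
    exact ⟨.func f (fun i => .var 0), fun i => (Fin.cast hf i).elim0⟩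

def HU (S : Sig) : Type := {t : Term S // t.isGround ∨ prop S}

theorem exists_assoc (w : Interp S) (B : ℕ → w.U) : ∃ β, Assoc w B β := by
  classical
  refine ⟨fun x => if h : IsNamed w (B x) then some h.choose else none, fun x => ⟨?_, ?_⟩⟩
  · intro h; simp [h]
  · intro t ht
    by_cases h : IsNamed w (B x)
    · simp only [h, dif_pos, Option.some.injEq] at ht
      rw [← ht]; exact h.choose_spec
    · simp [h] at ht

theorem args_eq (hp : prop S) {p : S.Pred} {α : Type} (a b : Fin (S.arP p) → α) : a = b := by
  funext i; exact (Fin.cast (hp p) i).elim0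

def sub (σ : ℕ → HU S) (a : PAtom S) : PAtom S := a.substA (fun x => (σ x).1)

theorem sub_ground (σ : ℕ → HU S) (a : PAtom S) : (sub σ a).isGround := by
  by_cases hp : prop S
  · exact fun i => (Fin.cast (hp _) i).elim0
  · exact fun i => ground_subst _ _ fun x => ⟨_, rfl, (σ x).2.resolve_right hp⟩

theorem formula_subst (a : PAtom S) (β : ℕ → Option (Term S)) :
    a.toFormula.subst β = Formula.atom a.p (fun i => (a.args i).subst β) := rfl

def EqCl (w : Interp S) (A : Set (Formula S)) : Prop :=
  ∀ (p : S.Pred) (ts ts' : Fin (S.arP p) → Term S), (∀ i, (ts i).isGround) →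
    (∀ i, (ts' i).isGround) → (∀ i, (ts i).evalG w = (ts' i).evalG w) →
    Formula.atom p ts ∈ A → Formula.atom p ts' ∈ A

theorem sat_box (X : Sem) (w : Interp S) (A : Set (Formula S)) (hA : EqCl w A)
    (σ : ℕ → HU S) (B : ℕ → w.U) (hB : ∀ x, (σ x).1.isGround → (σ x).1.evalG w = B x)
    (a : PAtom S) :
    Sat X w A (Formula.box a.toFormula) B ↔ (sub σ a).toFormula ∈ A := by
  have key : ∀ β, Assoc w B β → ((a.toFormula.subst β).closed ∧
      (a.toFormula.subst β ∈ A ↔ (sub σ a).toFormula ∈ A)) := by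
    intro β hβ
    by_cases hp : prop S
    · have h1 : a.toFormula.subst β = (sub σ a).toFormula := by
        rw [formula_subst]
        simp only [sub, PAtom.substA, PAtom.toFormula]
        congr 1
        exact args_eq hp _ _
      rw [h1]
      exact ⟨closed_of_ground trivial (sub_ground σ a), Iff.rfl⟩
    · have hg : ∀ x, (σ x).1.isGround := fun x => (σ x).2.resolve_right hp
      have hs : ∀ x, ∃ s, β x = some s ∧ s.isGround := by
        intro x
        have h1 := (hβ x).1 ⟨_, hg x, hB x (hg x)⟩
        obtain ⟨s, hs⟩ := Option.isSome_iff_exists.1 h1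
        exact ⟨s, hs, ((hβ x).2 s hs).1⟩
      have hg1 : ∀ i, ((a.args i).subst β).isGround := fun i => ground_subst _ _ hs
      have he : ∀ i, ((a.args i).subst β).evalG w = ((sub σ a).args i).evalG w := by
        intro i
        unfold Term.evalG
        rw [eval_ground w _ (hg1 i) _ B, eval_subst_opt w _ β B hβ]
        exact (eval_subst w _ _ B _ (fun x => hB x (hg x))).symm
      refine ⟨closed_of_ground trivial hg1, ?_, ?_⟩
      · exact hA _ _ _ hg1 (sub_ground σ a) he
      · exact hA _ _ _ (sub_ground σ a) hg1 (fun i => (he i).symm)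
  cases X with
  | any =>
    constructor
    · rintro ⟨β, h1, h2, h3⟩
      exact ((key β h1).2).1 h3
    · intro h
      obtain ⟨β, hβ⟩ := exists_assoc w B
      exact ⟨β, hβ, (key β hβ).1, (key β hβ).2.2 h⟩
  | all =>
    constructor
    · intro h
      obtain ⟨β, hβ⟩ := exists_assoc w B
      exact (key β hβ).2.1 (h β hβ).2
    · intro h β hβ
      exact ⟨(key β hβ).1, (key β hβ).2.2 h⟩

/-- box of a ground atomic formula -/
theorem sat_box_ground (X : Sem) (w : Interp S) (A : Set (Formula S)) (φ : Formula S)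
    (ha : φ.isAtomic) (hg : φ.isGround) (B : ℕ → w.U) :
    Sat X w A (Formula.box φ) B ↔ φ ∈ A := by
  have key : ∀ β, φ.subst β = φ := by
    intro β
    cases φ with
    | atom p ts =>
      simp only [Formula.subst]; congr 1; funext i; exact subst_ground _ _ (hg i)
    | eq a b => simp only [Formula.subst]; rw [subst_ground _ _ hg.1, subst_ground _ _ hg.2]
    | _ => exact ha.elim
  have hc := closed_of_ground ha hg
  obtain ⟨β, hβ⟩ := exists_assoc w B
  cases X with
  | any =>
    simp only [Sat, key]
    exact ⟨fun ⟨_, _, _, h⟩ => h, fun h => ⟨β, hβ, hc, h⟩⟩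
  | all =>
    simp only [Sat, key]
    exact ⟨fun h => (h β hβ).2, fun h _ _ => ⟨hc, h⟩⟩

/-! ### Ground conditions -/

def GRule (eb eh : Bool) (P : Program S) (M H : Set (PAtom S)) : Prop :=
  ∀ r ∈ P, ∀ σ : ℕ → HU S, (∀ b ∈ r.pos, sub σ b ∈ H ∧ (eb = true → sub σ b ∈ M)) →
    (∀ c ∈ r.neg, sub σ c ∉ M) → ∃ h ∈ r.head, sub σ h ∈ H ∧ (eh = true → sub σ h ∈ M)

def G (eb eh pia : Bool) (P : Program S) (M H : Set (PAtom S)) : Prop :=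
  GRule eb eh P M H ∧ (pia = true → ∀ a : PAtom S, a.isGround → a ∈ H → a ∈ M)

def Stab (P : Program S) (M : Set (PAtom S)) : Prop :=
  GRule false false P M M ∧ ∀ H, H ⊆ M → GRule false false P M H → M ⊆ H

theorem G_self (eb eh pia : Bool) (P : Program S) (M : Set (PAtom S))
    (h : GRule false false P M M) : G eb eh pia P M M := by
  refine ⟨fun r hr σ hb hc => ?_, fun _ _ _ h => h⟩
  obtain ⟨h', h1, h2, _⟩ := h r hr σ (fun b hb' => ⟨(hb b hb').1, by simp⟩) hc
  exact ⟨h', h1, h2, fun _ => h2⟩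

theorem head_unique {r : Rule S} (hr : r.isNormal) {a b : PAtom S} (ha : a ∈ r.head)
    (hb : b ∈ r.head) : a = b := by
  obtain ⟨c, hc⟩ := List.length_eq_one_iff.1 hr
  rw [hc] at ha hb
  simp at ha hb
  rw [ha, hb]

theorem char_iff (eb eh pia : Bool) (P : Program S) (hwf : progWf P)
    (hall : pia = true ∨ eh = true ∨ progNormal P) (M : Set (PAtom S))
    (hM : ∀ a ∈ M, a.isGround) :
    (∀ a : PAtom S, a.isGround → (a ∈ M ↔ ∀ H, G eb eh pia P M H → a ∈ H)) ↔ Stab P M := by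
  constructor
  · intro hch
    have hne : ∃ H, G eb eh pia P M H := by
      by_contra hno
      push Not at hno
      have hMall : ∀ a : PAtom S, a.isGround → a ∈ M := fun a ha =>
        (hch a ha).2 fun H hH => (hno H hH).elim
      refine hno {a | a.isGround} ⟨?_, fun _ a ha _ => hMall a ha⟩
      intro r hr σ _ _
      obtain ⟨h, hh⟩ := List.exists_mem_of_ne_nil _ (hwf r hr).1
      exact ⟨h, hh, sub_ground σ h, fun _ => hMall _ (sub_ground σ h)⟩
    have hsub : ∀ H, G eb eh pia P M H → M ⊆ H := fun H hH a ha =>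
      (hch a (hM a ha)).1 ha H hH
    refine ⟨?_, ?_⟩
    · intro r hr σ hb hc
      have hex : ∀ H, G eb eh pia P M H →
          ∃ h ∈ r.head, sub σ h ∈ H ∧ (eh = true → sub σ h ∈ M) := fun H hH =>
        hH.1 r hr σ (fun b hb' => ⟨hsub H hH (hb b hb').1, fun _ => (hb b hb').1⟩) hc
      obtain ⟨H0, hH0⟩ := hne
      obtain ⟨h, h1, h2, h3⟩ := hex H0 hH0
      refine ⟨h, h1, ?_, by simp⟩
      rcases hall with hp | he | hn
      · exact hH0.2 hp _ (sub_ground σ h) h2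
      · exact h3 he
      · refine (hch _ (sub_ground σ h)).2 fun H hH => ?_
        obtain ⟨h', h1', h2', _⟩ := hex H hH
        rwa [head_unique (hn r hr) h1 h1']
    · intro H hHM hH
      refine hsub H ⟨fun r hr σ hb hc => ?_, fun _ a _ ha => hHM ha⟩
      obtain ⟨h, h1, h2, _⟩ := hH r hr σ (fun b hb' => ⟨(hb b hb').1, by simp⟩) hc
      exact ⟨h, h1, h2, fun _ => hHM h2⟩
  · rintro ⟨hs1, hs2⟩ a ha
    constructor
    · intro haM H hH
      refine (hs2 (H ∩ M) Set.inter_subset_right ?_ haM).1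
      intro r hr σ hb hc
      obtain ⟨h, h1, h2, h3⟩ := hH.1 r hr σ
        (fun b hb' => ⟨(hb b hb').1.1, fun _ => (hb b hb').1.2⟩) hc
      refine ⟨h, h1, ⟨h2, ?_⟩, by simp⟩
      rcases hall with hp | he | hn
      · exact hH.2 hp _ (sub_ground σ h) h2
      · exact h3 he
      · obtain ⟨h', h1', h2', _⟩ := hs1 r hr σ (fun b hb' => ⟨(hb b hb').1.2, by simp⟩) hc
        rwa [head_unique (hn r hr) h1 h1']
    · intro h
      exact h M (G_self eb eh pia P M hs1)

/-! ### Correspondence of models -/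

def MA (A : Set (Formula S)) : Set (PAtom S) := {a | a.toFormula ∈ A}

theorem emb_iff (X : Sem) (w : Interp S) (A : Set (Formula S)) (hA : EqCl w A)
    (eb eh : Bool) (r : Rule S) (hr : r.head ≠ []) (H : Set (PAtom S))
    (σ : ℕ → HU S) (B : ℕ → w.U) (hB : ∀ x, (σ x).1.isGround → (σ x).1.evalG w = B x)
    (hat : ∀ a : PAtom S, Sat X w A a.toFormula B ↔ sub σ a ∈ H) :
    Sat X w A (impOf (r.pos.map (lit eb) ++
      r.neg.map (fun c => Formula.not (Formula.box c.toFormula)))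
      (disjOf (r.head.map (lit eh)))) B ↔
    ((∀ b ∈ r.pos, sub σ b ∈ H ∧ (eb = true → sub σ b ∈ MA A)) →
    (∀ c ∈ r.neg, sub σ c ∉ MA A) →
      ∃ h ∈ r.head, sub σ h ∈ H ∧ (eh = true → sub σ h ∈ MA A)) := by
  have hlit : ∀ (e : Bool) (a : PAtom S), Sat X w A (lit e a) B ↔
      (sub σ a ∈ H ∧ (e = true → sub σ a ∈ MA A)) := by
    intro e a
    cases e
    · simpa [lit] using hat a
    · simp only [lit, true_imp_iff]
      exact and_congr (hat a) (sat_box X w A hA σ B hB a)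
  have hneg : ∀ a : PAtom S, Sat X w A (Formula.not (Formula.box a.toFormula)) B ↔
      sub σ a ∉ MA A := fun a => not_congr (sat_box X w A hA σ B hB a)
  rw [sat_impOf, sat_disjOf _ _ _ _ (by simpa using hr)]
  simp only [List.mem_append, or_imp, forall_and, List.forall_mem_map,
    and_imp, hlit, hneg]
  simp only [List.mem_map, exists_exists_and_eq_and, hlit]

def Hw (w : Interp S) : Set (PAtom S) :=
  {a | w.interpP a.p (fun i => (a.args i).evalG w)}

theorem G_of_model (X : Sem) (w : Interp S) (A : Set (Formula S)) (hA : EqCl w A)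
    (eb eh pia : Bool) (P : Program S) (hwf : progWf P) (hfull : fullSig P)
    (hw : ModelsT X w A (Phi eb eh pia P)) :
    G eb eh pia P (MA A) (Hw w) := by
  constructor
  · intro r hr σ
    have h1 := hw _ (Or.inl (Or.inl ⟨r, hr, rfl⟩))
    have h2 := (models_uclosure X w A _ _).1 h1 (fun x => (σ x).1.evalG w)
    refine (emb_iff X w A hA eb eh r (hwf r hr).1 (Hw w) σ _ (fun _ _ => rfl) ?_).1 h2
    intro a
    have : ∀ i, (a.args i).eval w (fun x => (σ x).1.evalG w) =
        ((sub σ a).args i).evalG w := fun i =>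
      (eval_subst w _ _ _ _ (fun x => rfl)).symm
    simp only [PAtom.toFormula, Sat, this]
    exact Iff.rfl
  · intro hp a ha haH
    have h1 := hw _ (Or.inl (Or.inr ⟨hp, a, hfull.2 _,
      fun i => (name_iff hfull.1 _).2 (ha i), rfl⟩)) (fun _ => w.dflt)
    rw [sat_imp, sat_box_ground X w A a.toFormula trivial ha] at h1
    exact h1 haH

theorem una_iff (X : Sem) (w : Interp S) (A : Set (Formula S)) (P : Program S)
    (hfull : fullSig P) : ModelsT X w A (UNAax P) ↔
    ∀ t t' : Term S, t.isGround → t'.isGround → t.evalG w = t'.evalG w →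
      t = t' ∨ Formula.eq t t' ∈ A := by
  have key : ∀ t t' : Term S, t.isGround → t'.isGround → ∀ B : ℕ → w.U,
      (Sat X w A (Formula.imp (Formula.not (Formula.box (Formula.eq t t')))
              (Formula.not (Formula.eq t t'))) B ↔
        (t.evalG w = t'.evalG w → Formula.eq t t' ∈ A)) := by
    intro t t' h h' B
    rw [sat_imp]
    have h1 := sat_box_ground X w A (.eq t t') trivial ⟨h, h'⟩ B
    have h2 : Sat X w A (.eq t t') B ↔ t.evalG w = t'.evalG w := by
      simp only [Sat, Term.evalG]
      rw [eval_ground w t h _ (fun _ => w.dflt), eval_ground w t' h' _ (fun _ => w.dflt)]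
    change (¬ _ → ¬ _) ↔ _
    rw [h1, h2]; tauto
  constructor
  · intro h t t' ht ht' he
    by_cases heq : t = t'
    · exact Or.inl heq
    · right
      exact (key t t' ht ht' (fun _ => w.dflt)).1
        (h _ ⟨t, t', (name_iff hfull.1 _).2 ht, (name_iff hfull.1 _).2 ht', heq, rfl⟩ _) he
  · rintro h φ ⟨t, t', ht, ht', hne, rfl⟩ B
    rw [name_iff hfull.1] at ht ht'
    exact (key t t' ht ht' B).2 fun he => (h t t' ht ht' he).resolve_left hne

/-! Herbrand interpretation -/

def hI (hn : Nonempty (HU S)) (H : Set (PAtom S)) : Interp S where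
  U := HU S
  nonempty := hn
  interpF := fun f us => ⟨.func f (fun i => (us i).1), by
    by_cases hp : prop S
    · exact Or.inr hp
    · exact Or.inl fun i => (us i).2.resolve_right hp⟩
  interpP := fun p us => (⟨p, fun i => (us i).1⟩ : PAtom S) ∈ H

theorem hI_eval (hn : Nonempty (HU S)) (H : Set (PAtom S)) (B : ℕ → HU S) (t : Term S) :
    (t.eval (hI hn H) B).1 = t.subst (fun x => some (B x).1) := by
  induction t with
  | var x => rfl
  | func f ts ih =>
    simp only [Term.eval, Term.subst, hI]
    congr 1
    funext i; exact ih i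

theorem hI_evalG (hn : Nonempty (HU S)) (H : Set (PAtom S)) (t : Term S) (ht : t.isGround) :
    (t.evalG (hI hn H)).1 = t := by
  exact (hI_eval hn H _ t).trans (subst_ground t _ ht)

theorem hI_inj (hn : Nonempty (HU S)) (H : Set (PAtom S)) (t t' : Term S) (ht : t.isGround)
    (ht' : t'.isGround) (h : t.evalG (hI hn H) = t'.evalG (hI hn H)) : t = t' := by
  rw [← hI_evalG hn H t ht, ← hI_evalG hn H t' ht', h]

theorem hI_eqCl (hn : Nonempty (HU S)) (H : Set (PAtom S)) (A : Set (Formula S)) :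
    EqCl (hI hn H) A := by
  intro p ts ts' h h' he hm
  have : ts = ts' := funext fun i => hI_inj hn H _ _ (h i) (h' i) (he i)
  rwa [← this]

theorem hI_atom (hn : Nonempty (HU S)) (H : Set (PAtom S)) (a : PAtom S) (ha : a.isGround) :
    a ∈ Hw (hI hn H) ↔ a ∈ H := by
  have : (fun i => ((a.args i).evalG (hI hn H)).1) = a.args :=
    funext fun i => hI_evalG hn H _ (ha i)
  change (⟨a.p, fun i => ((a.args i).evalG (hI hn H)).1⟩ : PAtom S) ∈ H ↔ _
  rw [this]

theorem model_of_G (X : Sem) (hn : Nonempty (HU S)) (A : Set (Formula S))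
    (eb eh pia : Bool) (P : Program S) (hwf : progWf P) (hfull : fullSig P)
    (H : Set (PAtom S)) (hG : G eb eh pia P (MA A) H) :
    ModelsT X (hI hn H) A (Phi eb eh pia P) := by
  rintro φ ((⟨r, hr, rfl⟩ | ⟨hp, a, _, ha, rfl⟩) | hu)
  · refine (models_uclosure X _ A _ _).2 fun B => ?_
    refine (emb_iff X (hI hn H) A (hI_eqCl hn H A) eb eh r (hwf r hr).1 H B B ?_ ?_).2
      (hG.1 r hr B)
    · intro x hx
      exact Subtype.ext (hI_evalG hn H _ hx)
    · intro a
      change (⟨a.p, fun i => ((a.args i).eval (hI hn H) B).1⟩ : PAtom S) ∈ H ↔ _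
      have : (fun i => ((a.args i).eval (hI hn H) B).1) =
          fun i => (a.args i).subst (fun x => some (B x).1) :=
        funext fun i => hI_eval hn H B _
      rw [this]
      exact Iff.rfl
  · intro B
    have ha' : a.isGround := fun i => (name_iff hfull.1 _).1 (ha i)
    rw [sat_imp, sat_box_ground X _ A a.toFormula trivial ha']
    intro h
    refine hG.2 hp a ha' ((hI_atom hn H a ha').1 ?_)
    have : ∀ i, (a.args i).eval (hI hn H) B = (a.args i).evalG (hI hn H) := fun i =>
      eval_ground _ _ (ha' i) _ _
    simp only [PAtom.toFormula, Sat, this] at h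
    exact h
  · exact (una_iff X (hI hn H) A P hfull).2
      (fun t t' h h' he => Or.inl (hI_inj hn H t t' h h' he)) φ hu

theorem models_atom (X : Sem) (w : Interp S) (A : Set (Formula S)) (a : PAtom S)
    (ha : a.isGround) : ModelsF X w A a.toFormula ↔ a ∈ Hw w := by
  have : ∀ B : ℕ → w.U, ∀ i, (a.args i).eval w B = (a.args i).evalG w := fun B i =>
      eval_ground _ _ (ha i) _ _
  simp only [ModelsF, PAtom.toFormula, Sat, this]
  exact ⟨fun h => h (fun _ => w.dflt), fun h _ => h⟩

theorem models_eq (X : Sem) (w : Interp S) (A : Set (Formula S)) (t t' : Term S)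
    (h : t.isGround) (h' : t'.isGround) :
    ModelsF X w A (.eq t t') ↔ t.evalG w = t'.evalG w := by
  have h1 : ∀ B : ℕ → w.U, t.eval w B = t.evalG w := fun B => eval_ground _ _ h _ _
  have h2 : ∀ B : ℕ → w.U, t'.eval w B = t'.evalG w := fun B => eval_ground _ _ h' _ _
  simp only [ModelsF, Sat, h1, h2]
  exact ⟨fun h => h (fun _ => w.dflt), fun h _ => h⟩

def Canon (P : Program S) (A : Set (Formula S)) : Prop :=
  (∀ φ ∈ A, oga φ) ∧
  (∀ t t' : Term S, t.isGround → t'.isGround → (Formula.eq t t' ∈ A ↔ t = t')) ∧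
  Stab P (MA A)

theorem char_of (X : Sem) (P : Program S) (A : Set (Formula S)) (hn : Nonempty (HU S))
    (hwf : progWf P) (hfull : fullSig P) (eb eh pia : Bool)
    (hcl : ∀ w, ModelsT X w A (Phi eb eh pia P) → EqCl w A) (a : PAtom S) (ha : a.isGround) :
    (∀ w, ModelsT X w A (Phi eb eh pia P) → ModelsF X w A a.toFormula) ↔
      ∀ H, G eb eh pia P (MA A) H → a ∈ H := by
  constructor
  · intro h H hH
    have := h _ (model_of_G X hn A eb eh pia P hwf hfull H hH)
    rw [models_atom X _ A a ha] at this
    exact (hI_atom hn H a ha).1 this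
  · intro h w hw
    rw [models_atom X _ A a ha]
    exact h _ (G_of_model X w A (hcl w hw) eb eh pia P hwf hfull hw)

theorem fix_iff (X : Sem) (P : Program S) (A : Set (Formula S)) (hwf : progWf P)
    (hfull : fullSig P) (hgood : goodSig P) (eb eh pia : Bool)
    (hall : pia = true ∨ eh = true ∨ progNormal P) :
    Fix X (Phi eb eh pia P) A ↔ Canon P A := by
  have hn : Nonempty (HU S) := by
    rcases dich P hfull hgood with ⟨t, ht⟩ | hp
    · exact ⟨⟨t, Or.inl ht⟩⟩
    · exact ⟨⟨.var 0, Or.inr hp⟩⟩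
  have huna : ∀ w, ModelsT X w A (Phi eb eh pia P) → ∀ t t' : Term S, t.isGround →
      t'.isGround → t.evalG w = t'.evalG w → t = t' ∨ Formula.eq t t' ∈ A := fun w hw =>
    (una_iff X w A P hfull).1 fun φ hφ => hw φ (Or.inr hφ)
  constructor
  · intro hF
    have hoga : ∀ φ ∈ A, oga φ := fun φ hφ => ((hF φ).1 hφ).1
    have hMg : ∀ a ∈ MA A, a.isGround := fun a ha => (hoga _ ha).2.1
    have hcl : ∀ w, ModelsT X w A (Phi eb eh pia P) → EqCl w A := by
      intro w hw p ts ts' h h' he hm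
      refine (hF _).2 ⟨⟨trivial, h', trivial⟩, fun w' hw' => ?_⟩
      have h1 := ((hF _).1 hm).2 w' hw'
      have h2 := (models_atom X w' A ⟨p, ts⟩ h).1 h1
      refine (models_atom X w' A ⟨p, ts'⟩ h').2 ?_
      have h3 : ∀ i, (ts i).evalG w' = (ts' i).evalG w' := by
        intro i
        rcases huna w hw _ _ (h i) (h' i) (he i) with h4 | h4
        · rw [h4]
        · exact (models_eq X w' A _ _ (h i) (h' i)).1 (((hF _).1 h4).2 w' hw')
      simp only [Hw, Set.mem_ofPred_eq, h3] at h2 ⊢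
      exact h2
    have hst : Stab P (MA A) := by
      rw [← char_iff eb eh pia P hwf hall (MA A) hMg]
      intro a ha
      rw [← char_of X P A hn hwf hfull eb eh pia hcl a ha]
      change a.toFormula ∈ A ↔ _
      rw [hF]
      exact ⟨fun h => h.2, fun h => ⟨⟨trivial, ha, trivial⟩, h⟩⟩
    refine ⟨hoga, fun t t' h h' => ⟨fun he => ?_, ?_⟩, hst⟩
    · have hm := model_of_G X hn A eb eh pia P hwf hfull _ (G_self eb eh pia P _ hst.1)
      exact hI_inj hn _ _ _ h h' ((models_eq X _ A _ _ h h').1 (((hF _).1 he).2 _ hm))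
    · rintro rfl
      exact (hF _).2 ⟨⟨trivial, ⟨h, h⟩, trivial⟩, fun w _ => (models_eq X _ A _ _ h h).2 rfl⟩
  · rintro ⟨hoga, heq, hst⟩
    have hMg : ∀ a ∈ MA A, a.isGround := fun a ha => (hoga _ ha).2.1
    have hcl : ∀ w, ModelsT X w A (Phi eb eh pia P) → EqCl w A := by
      intro w hw p ts ts' h h' he hm
      have : ts = ts' := funext fun i => by
        rcases huna w hw _ _ (h i) (h' i) (he i) with h4 | h4
        · exact h4
        · exact (heq _ _ (h i) (h' i)).1 h4
      rwa [← this]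
    have hch := (char_iff eb eh pia P hwf hall (MA A) hMg).2 hst
    intro φ
    by_cases ho : oga φ
    swap
    · exact ⟨fun h => (ho (hoga φ h)).elim, fun h => (ho h.1).elim⟩
    simp only [ho, true_and]
    cases φ with
    | atom p ts =>
      have h1 := hch ⟨p, ts⟩ ho.2.1
      rw [← char_of X P A hn hwf hfull eb eh pia hcl ⟨p, ts⟩ ho.2.1] at h1
      exact h1
    | eq t t' =>
      obtain ⟨h, h'⟩ := ho.2.1
      rw [heq t t' h h']
      constructor
      · rintro rfl w _
        exact (models_eq X _ A _ _ h h).2 rfl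
      · intro hm
        have hm' := hm _ (model_of_G X hn A eb eh pia P hwf hfull _
          (G_self eb eh pia P _ hst.1))
        exact hI_inj hn _ _ _ h h' ((models_eq X _ A _ _ h h').1 hm')
    | _ => exact ho.2.2.elim

theorem main_equiv (X : Sem) (P : Program S) (hwf : progWf P)
    (hfull : fullSig P) (hgood : goodSig P) (eb eh pia eb' eh' pia' : Bool)
    (hall : pia = true ∨ eh = true ∨ progNormal P)
    (hall' : pia' = true ∨ eh' = true ∨ progNormal P) :
    ExpEquivSel X ogaOf (Phi eb eh pia P) (Phi eb' eh' pia' P) :=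
  equiv_of_fix X _ _ (Phi_ba _ _ _ P) (Phi_ba _ _ _ P) fun A =>
    (fix_iff X P A hwf hfull hgood eb eh pia hall).trans
      (fix_iff X P A hwf hfull hgood eb' eh' pia' hall').symm

end Stmt5Aux

/-- Theorem on correspondence w.r.t. ground atoms: for every
disjunctive program `P`, the embeddings `τ^∨_HP`, `τ^∨_EB`, `τ^∨_EH` pairwise satisfy
`τ(P) ≡ˣ_oga τ'(P)`; for normal `P` all six embeddings do. -/
theorem stmt5 {S : Sig} (X : Sem) (P : Program S)
    (hwf : progWf P) (hfull : fullSig P) (hgood : goodSig P) :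
    (∀ τ τ' : Program S → Set (Formula S),
        τ ∈ ({tauHPv, tauEBv, tauEHv} : Set (Program S → Set (Formula S))) →
        τ' ∈ ({tauHPv, tauEBv, tauEHv} : Set (Program S → Set (Formula S))) →
        ExpEquivSel X ogaOf (τ P) (τ' P)) ∧
    (progNormal P →
      ∀ τ τ' : Program S → Set (Formula S),
        τ ∈ ({tauHP, tauEB, tauEH, tauHPv, tauEBv, tauEHv} :
              Set (Program S → Set (Formula S))) →
        τ' ∈ ({tauHP, tauEB, tauEH, tauHPv, tauEBv, tauEHv} :
              Set (Program S → Set (Formula S))) →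
        ExpEquivSel X ogaOf (τ P) (τ' P)) := by
  constructor
  · intro τ τ' h h'
    have key : ∀ τ ∈ ({tauHPv, tauEBv, tauEHv} : Set (Program S → Set (Formula S))),
        ∃ eb eh pia, τ P = Stmt5Aux.Phi eb eh pia P ∧
          (pia = true ∨ eh = true ∨ progNormal P) := by
      rintro τ (rfl | rfl | rfl)
      · exact ⟨_, _, _, Stmt5Aux.tauHPv_eq P, Or.inl rfl⟩
      · exact ⟨_, _, _, Stmt5Aux.tauEBv_eq P, Or.inl rfl⟩
      · exact ⟨_, _, _, Stmt5Aux.tauEHv_eq P, Or.inr (Or.inl rfl)⟩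
    obtain ⟨a, b, c, h1, h2⟩ := key τ h
    obtain ⟨a', b', c', h1', h2'⟩ := key τ' h'
    rw [h1, h1']
    exact Stmt5Aux.main_equiv X P hwf hfull hgood a b c a' b' c' h2 h2'
  · intro hn τ τ' h h'
    have key : ∀ τ ∈ ({tauHP, tauEB, tauEH, tauHPv, tauEBv, tauEHv} :
        Set (Program S → Set (Formula S))),
        ∃ eb eh pia, τ P = Stmt5Aux.Phi eb eh pia P := by
      rintro τ (rfl | rfl | rfl | rfl | rfl | rfl)
      · exact ⟨_, _, _, Stmt5Aux.tauHP_eq P⟩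
      · exact ⟨_, _, _, Stmt5Aux.tauEB_eq P⟩
      · exact ⟨_, _, _, Stmt5Aux.tauEH_eq P⟩
      · exact ⟨_, _, _, Stmt5Aux.tauHPv_eq P⟩
      · exact ⟨_, _, _, Stmt5Aux.tauEBv_eq P⟩
      · exact ⟨_, _, _, Stmt5Aux.tauEHv_eq P⟩
    obtain ⟨a, b, c, h1⟩ := key τ h
    obtain ⟨a', b', c', h1'⟩ := key τ' h'
    rw [h1, h1']
    exact Stmt5Aux.main_equiv X P hwf hfull hgood a b c a' b' c'
      (Or.inr (Or.inr hn)) (Or.inr (Or.inr hn))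
end

section
/- For every normal logic program P and X ∈ {E,A}, τ_EB(P) ≡ˣ_og τ_EH(P); and for every disjunctive logic program P, τ^∨_HP(P) ≡ˣ_og τ^∨_EB(P). -/
set_option autoImplicit false

namespace Aux

variable {S : Sig}

theorem eval_ground (w : Interp S) (B B' : ℕ → w.U) (t : Term S) (h : t.isGround) :
    t.eval w B = t.eval w B' := by
  induction t with
  | var x => exact absurd h (by simp [Term.isGround])
  | func f ts ih =>
    simp only [Term.isGround] at h
    simp only [Term.eval]
    congr 1
    funext i
    exact ih i (h i)

theorem evalG_eq (w : Interp S) (B : ℕ → w.U) (t : Term S) (h : t.isGround) :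
    Term.evalG w t = t.eval w B := eval_ground w _ B t h

theorem ground_of_noVar (t : Term S) (h : ∀ x, ¬ t.hasVar x) : t.isGround := by
  induction t with
  | var x => exact absurd rfl (h x)
  | func f ts ih =>
    intro i
    exact ih i (fun x hx => h x ⟨i, hx⟩)

theorem noVar_of_ground (t : Term S) (h : t.isGround) (x : ℕ) : ¬ t.hasVar x := by
  induction t with
  | var x => exact absurd h (by simp [Term.isGround])
  | func f ts ih =>
    rintro ⟨i, hi⟩
    exact ih i (h i) hi

theorem subst_ground (β : ℕ → Option (Term S)) (t : Term S) (h : t.isGround) :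
    t.subst β = t := by
  induction t with
  | var x => exact absurd h (by simp [Term.isGround])
  | func f ts ih =>
    simp only [Term.subst]
    congr 1
    funext i
    exact ih i (h i)

theorem isNameOf_of_ground (F : Set S.Func) (hF : ∀ f, f ∈ F) (t : Term S) (h : t.isGround) :
    t.isNameOf F := by
  induction t with
  | var x => exact absurd h (by simp [Term.isGround])
  | func f ts ih => exact ⟨hF f, fun i => ih i (h i)⟩

theorem ground_of_isNameOf (F : Set S.Func) (t : Term S) (h : t.isNameOf F) :
    t.isGround := by
  induction t with
  | var x => exact absurd h (by simp [Term.isNameOf])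
  | func f ts ih => exact fun i => ih i (h.2 i)

theorem subst_isGround (β : ℕ → Option (Term S)) (t : Term S)
    (h : ∀ x, t.hasVar x → ∃ s, β x = some s ∧ s.isGround) : (t.subst β).isGround := by
  induction t with
  | var x =>
    obtain ⟨s, hs, hg⟩ := h x rfl
    simpa [Term.subst, hs] using hg
  | func f ts ih =>
    intro i
    exact ih i (fun x hx => h x ⟨i, hx⟩)

theorem eval_subst (w : Interp S) (B B' : ℕ → w.U) (β : ℕ → Option (Term S)) (t : Term S)
    (h : ∀ x, t.hasVar x → ∃ s, β x = some s ∧ s.isGround ∧ Term.evalG w s = B x) :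
    (t.subst β).eval w B' = t.eval w B := by
  induction t with
  | var x =>
    obtain ⟨s, hs, hg, he⟩ := h x rfl
    simp only [Term.subst, hs, Option.getD_some, Term.eval]
    rw [← he, evalG_eq w B' s hg]
  | func f ts ih =>
    simp only [Term.subst, Term.eval]
    congr 1
    funext i
    exact ih i (fun x hx => h x ⟨i, hx⟩)

theorem eval_subst_congr (w : Interp S) (B : ℕ → w.U) (β β' : ℕ → Option (Term S)) (t : Term S)
    (h : ∀ x, t.hasVar x → ∃ s s', β x = some s ∧ β' x = some s' ∧ s.eval w B = s'.eval w B) :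
    (t.subst β).eval w B = (t.subst β').eval w B := by
  induction t with
  | var x =>
    obtain ⟨s, s', hs, hs', he⟩ := h x rfl
    simpa only [Term.subst, hs, hs', Option.getD_some] using he
  | func f ts ih =>
    simp only [Term.subst, Term.eval]
    congr 1
    funext i
    exact ih i (fun x hx => h x ⟨i, hx⟩)

theorem exists_assoc (w : Interp S) (B : ℕ → w.U) : ∃ β, Assoc w B β := by
  classical
  refine ⟨fun x => if h : IsNamed w (B x) then some (Classical.choose h) else none, fun x => ⟨?_, ?_⟩⟩
  · intro h
    simp [h]
  · intro t ht
    by_cases h : IsNamed w (B x)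
    · simp only [h, dif_pos, Option.some.injEq] at ht
      subst ht
      exact Classical.choose_spec h
    · simp [h] at ht

/-! ### Satisfaction lemmas -/

section sat
variable (X : Sem) (w : Interp S) (Γ : Set (Formula S)) (B : ℕ → w.U)

theorem sat_not (φ : Formula S) : Sat X w Γ (.not φ) B ↔ ¬ Sat X w Γ φ B := by
  simp only [Sat]

theorem sat_and (φ ψ : Formula S) :
    Sat X w Γ (.and φ ψ) B ↔ Sat X w Γ φ B ∧ Sat X w Γ ψ B := by
  simp only [Sat]

theorem sat_imp (φ ψ : Formula S) :
    Sat X w Γ (.imp φ ψ) B ↔ (Sat X w Γ φ B → Sat X w Γ ψ B) := by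
  simp only [Formula.imp, sat_not, sat_and]
  tauto

theorem sat_andAll (φ : Formula S) (l : List (Formula S)) :
    Sat X w Γ (andAll φ l) B ↔ Sat X w Γ φ B ∧ ∀ ψ ∈ l, Sat X w Γ ψ B := by
  induction l generalizing φ with
  | nil => simp [andAll]
  | cons a l ih =>
    simp only [andAll, ih, sat_and, List.mem_cons, forall_eq_or_imp]
    tauto

theorem sat_impOf (l : List (Formula S)) (c : Formula S) :
    Sat X w Γ (impOf l c) B ↔ ((∀ ψ ∈ l, Sat X w Γ ψ B) → Sat X w Γ c B) := by
  cases l with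
  | nil => simp [impOf]
  | cons a l => simp only [impOf, sat_imp, sat_andAll, List.mem_cons, forall_eq_or_imp]

theorem models_all (x : ℕ) (φ : Formula S) :
    ModelsF X w Γ (.all x φ) ↔ ModelsF X w Γ φ := by
  simp only [ModelsF, Formula.all, Sat]
  constructor
  · intro h B
    by_contra hB
    exact h B ⟨B x, by simpa using hB⟩
  · rintro h B ⟨u, hu⟩
    exact hu (h _)

theorem models_uclosure (vs : List ℕ) (φ : Formula S) :
    ModelsF X w Γ (uclosure vs φ) ↔ ModelsF X w Γ φ := by
  induction vs with
  | nil => rfl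
  | cons x vs ih => exact (models_all X w Γ x _).trans ih

theorem sat_box_self (φ : Formula S) (hs : ∀ β, φ.subst β = φ) (hc : φ.closed) :
    Sat X w Γ (.box φ) B ↔ φ ∈ Γ := by
  obtain ⟨β₀, h₀⟩ := exists_assoc w B
  cases X
  · simp only [Sat, hs]
    exact ⟨fun ⟨β, _, _, h⟩ => h, fun h => ⟨β₀, h₀, hc, h⟩⟩
  · simp only [Sat, hs]
    exact ⟨fun h => (h β₀ h₀).2, fun h β _ => ⟨hc, h⟩⟩

end sat

theorem models_embEB (X : Sem) (w : Interp S) (Γ : Set (Formula S)) (r : Rule S) :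
    ModelsF X w Γ (embEB r) ↔ ∀ B : ℕ → w.U,
      (∀ b ∈ r.pos, Sat X w Γ b.toFormula B ∧ Sat X w Γ (.box b.toFormula) B) →
      (∀ c ∈ r.neg, ¬ Sat X w Γ (.box c.toFormula) B) →
      Sat X w Γ (disjOf (r.head.map PAtom.toFormula)) B := by
  rw [embEB, models_uclosure]
  simp only [ModelsF, sat_impOf, bodyE, List.mem_append, List.mem_map, or_imp, forall_and,
    forall_exists_index, and_imp, forall_apply_eq_imp_iff₂, sat_and, sat_not]

theorem models_embEH (X : Sem) (w : Interp S) (Γ : Set (Formula S)) (r : Rule S) :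
    ModelsF X w Γ (embEH r) ↔ ∀ B : ℕ → w.U,
      (∀ b ∈ r.pos, Sat X w Γ b.toFormula B ∧ Sat X w Γ (.box b.toFormula) B) →
      (∀ c ∈ r.neg, ¬ Sat X w Γ (.box c.toFormula) B) →
      Sat X w Γ (disjOf (r.head.map
        (fun h => Formula.and h.toFormula (Formula.box h.toFormula)))) B := by
  rw [embEH, models_uclosure]
  simp only [ModelsF, sat_impOf, bodyE, List.mem_append, List.mem_map, or_imp, forall_and,
    forall_exists_index, and_imp, forall_apply_eq_imp_iff₂, sat_and, sat_not]

theorem models_embHP (X : Sem) (w : Interp S) (Γ : Set (Formula S)) (r : Rule S) :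
    ModelsF X w Γ (embHP r) ↔ ∀ B : ℕ → w.U,
      (∀ b ∈ r.pos, Sat X w Γ b.toFormula B) →
      (∀ c ∈ r.neg, ¬ Sat X w Γ (.box c.toFormula) B) →
      Sat X w Γ (disjOf (r.head.map PAtom.toFormula)) B := by
  rw [embHP, models_uclosure]
  simp only [ModelsF, sat_impOf, bodyHP, List.mem_append, List.mem_map, or_imp, forall_and,
    forall_exists_index, and_imp, forall_apply_eq_imp_iff₂, sat_not]

/-! ### Box-atomic formulas and quantifier-free formulas -/

def qf : Formula S → Prop
  | .atom _ _ => True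
  | .eq _ _ => True
  | .not φ => qf φ
  | .and φ ψ => qf φ ∧ qf ψ
  | .ex _ _ => False
  | .box _ => True

/-- quantifier free and box atomic -/
def good (φ : Formula S) : Prop := qf φ ∧ φ.boxAtomic

theorem good_atom (a : PAtom S) : good a.toFormula := ⟨trivial, trivial⟩
theorem good_box (a : PAtom S) : good (.box a.toFormula) := ⟨trivial, trivial⟩
theorem good_not {φ : Formula S} (h : good φ) : good (.not φ) := ⟨h.1, h.2⟩
theorem good_and {φ ψ : Formula S} (h : good φ) (h' : good ψ) : good (.and φ ψ) :=
  ⟨⟨h.1, h'.1⟩, ⟨h.2, h'.2⟩⟩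
theorem good_imp {φ ψ : Formula S} (h : good φ) (h' : good ψ) : good (.imp φ ψ) :=
  good_not (good_and h (good_not h'))
theorem good_or {φ ψ : Formula S} (h : good φ) (h' : good ψ) : good (.or φ ψ) :=
  good_not (good_and (good_not h) (good_not h'))

theorem good_andAll (φ : Formula S) (l : List (Formula S)) (h : good φ) (hl : ∀ ψ ∈ l, good ψ) :
    good (andAll φ l) := by
  induction l generalizing φ with
  | nil => exact h
  | cons a l ih => exact ih _ (good_and h (hl a (by simp))) (fun ψ hψ => hl ψ (by simp [hψ]))

theorem good_orAll (φ : Formula S) (l : List (Formula S)) (h : good φ) (hl : ∀ ψ ∈ l, good ψ) :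
    good (orAll φ l) := by
  induction l generalizing φ with
  | nil => exact h
  | cons a l ih => exact ih _ (good_or h (hl a (by simp))) (fun ψ hψ => hl ψ (by simp [hψ]))

theorem good_disjOf (l : List (Formula S)) (hl : ∀ ψ ∈ l, good ψ) : good (disjOf l) := by
  cases l with
  | nil => exact ⟨trivial, trivial⟩
  | cons a l => exact good_orAll _ _ (hl a (by simp)) (fun ψ hψ => hl ψ (by simp [hψ]))

theorem good_impOf (l : List (Formula S)) (c : Formula S) (hl : ∀ ψ ∈ l, good ψ) (hc : good c) :
    good (impOf l c) := by
  cases l with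
  | nil => exact hc
  | cons a l =>
    exact good_imp (good_andAll _ _ (hl a (by simp)) (fun ψ hψ => hl ψ (by simp [hψ]))) hc

/-- a universal closure of a good formula -/
def ugood (φ : Formula S) : Prop := ∃ vs ψ, φ = uclosure vs ψ ∧ good ψ

theorem good_bodyE (r : Rule S) : ∀ ψ ∈ bodyE r, good ψ := by
  intro ψ h
  simp only [bodyE, List.mem_append, List.mem_map] at h
  rcases h with ⟨a, _, rfl⟩ | ⟨a, _, rfl⟩
  · exact good_and (good_atom a) (good_box a)
  · exact good_not (good_box a)

theorem good_bodyHP (r : Rule S) : ∀ ψ ∈ bodyHP r, good ψ := by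
  intro ψ h
  simp only [bodyHP, List.mem_append, List.mem_map] at h
  rcases h with ⟨a, _, rfl⟩ | ⟨a, _, rfl⟩
  · exact good_atom a
  · exact good_not (good_box a)

theorem good_head (r : Rule S) : good (disjOf (r.head.map PAtom.toFormula)) := by
  apply good_disjOf
  intro ψ h
  obtain ⟨a, _, rfl⟩ := List.mem_map.1 h
  exact good_atom a

theorem good_headH (r : Rule S) : good (disjOf (r.head.map
        (fun h => Formula.and h.toFormula (Formula.box h.toFormula)))) := by
  apply good_disjOf
  intro ψ h
  obtain ⟨a, _, rfl⟩ := List.mem_map.1 h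
  exact good_and (good_atom a) (good_box a)

theorem ugood_UNA (P : Program S) : ∀ φ ∈ UNAax P, ugood φ := by
  rintro φ ⟨t₁, t₂, _, _, _, rfl⟩
  exact ⟨[], _, rfl, good_imp ⟨trivial, trivial⟩ ⟨trivial, trivial⟩⟩

theorem ugood_PIA (P : Program S) : ∀ φ ∈ PIAax P, ugood φ := by
  rintro φ ⟨a, _, _, rfl⟩
  exact ⟨[], _, rfl, good_imp (good_atom a) (good_box a)⟩

theorem ugood_EB (P : Program S) : ∀ φ ∈ ruleEmb embEB P, ugood φ := by
  rintro φ ⟨r, _, rfl⟩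
  exact ⟨_, _, rfl, good_impOf _ _ (good_bodyE r) (good_head r)⟩

theorem ugood_EH (P : Program S) : ∀ φ ∈ ruleEmb embEH P, ugood φ := by
  rintro φ ⟨r, _, rfl⟩
  exact ⟨_, _, rfl, good_impOf _ _ (good_bodyE r) (good_headH r)⟩

theorem ugood_HP (P : Program S) : ∀ φ ∈ ruleEmb embHP P, ugood φ := by
  rintro φ ⟨r, _, rfl⟩
  exact ⟨_, _, rfl, good_impOf _ _ (good_bodyHP r) (good_head r)⟩

theorem ugood_tauEB (P : Program S) : ∀ φ ∈ tauEB P, ugood φ := by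
  rintro φ (h | h)
  exacts [ugood_EB P φ h, ugood_UNA P φ h]
theorem ugood_tauEH (P : Program S) : ∀ φ ∈ tauEH P, ugood φ := by
  rintro φ (h | h)
  exacts [ugood_EH P φ h, ugood_UNA P φ h]
theorem ugood_tauEBv (P : Program S) : ∀ φ ∈ tauEBv P, ugood φ := by
  rintro φ ((h | h) | h)
  exacts [ugood_EB P φ h, ugood_PIA P φ h, ugood_UNA P φ h]
theorem ugood_tauHPv (P : Program S) : ∀ φ ∈ tauHPv P, ugood φ := by
  rintro φ ((h | h) | h)
  exacts [ugood_HP P φ h, ugood_PIA P φ h, ugood_UNA P φ h]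

theorem atomic_subst (φ : Formula S) (β) (h : φ.isAtomic) : (φ.subst β).isAtomic := by
  cases φ <;> simp_all [Formula.isAtomic, Formula.subst]

theorem atomic_obj (φ : Formula S) (h : φ.isAtomic) : φ.isObjective := by
  cases φ <;> simp_all [Formula.isAtomic, Formula.isObjective]

theorem atomic_closed_ground (φ : Formula S) (h : φ.isAtomic) (hc : φ.closed) : φ.isGround := by
  cases φ with
  | atom p ts =>
    intro i
    exact ground_of_noVar _ (fun x hx => hc x ⟨i, hx⟩)
  | eq s t =>
    exact ⟨ground_of_noVar _ (fun x hx => hc x (Or.inl hx)),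
      ground_of_noVar _ (fun x hx => hc x (Or.inr hx))⟩
  | _ => exact absurd h (by simp [Formula.isAtomic])

theorem sat_congr_boxAtomic (X : Sem) (w : Interp S) (Γ Γ' : Set (Formula S))
    (hΓ : ∀ φ : Formula S, φ.isObjective → φ.isGround → (φ ∈ Γ ↔ φ ∈ Γ'))
    (φ : Formula S) (h : φ.boxAtomic) (B : ℕ → w.U) :
    Sat X w Γ φ B ↔ Sat X w Γ' φ B := by
  induction φ generalizing B with
  | atom p ts => simp only [Sat]
  | eq s t => simp only [Sat]
  | not φ ih => simp only [Sat, ih h]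
  | and φ ψ ih ih' => simp only [Sat, ih h.1, ih' h.2]
  | ex x φ ih => simp only [Sat, ih h]
  | box φ =>
    have key : ∀ β, ((φ.subst β).closed ∧ φ.subst β ∈ Γ) ↔
        ((φ.subst β).closed ∧ φ.subst β ∈ Γ') := by
      intro β
      have ha := atomic_subst φ β h
      exact and_congr_right fun hc => hΓ _ (atomic_obj _ ha) (atomic_closed_ground _ ha hc)
    cases X <;> simp only [Sat, key]

theorem models_congr (X : Sem) (w : Interp S) (Γ Γ' Φ : Set (Formula S))
    (hΓ : ∀ φ : Formula S, φ.isObjective → φ.isGround → (φ ∈ Γ ↔ φ ∈ Γ'))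
    (hΦ : ∀ φ ∈ Φ, ugood φ) : ModelsT X w Γ Φ ↔ ModelsT X w Γ' Φ := by
  refine forall₂_congr fun φ hφ => ?_
  obtain ⟨vs, ψ, rfl, hψ⟩ := hΦ φ hφ
  rw [models_uclosure, models_uclosure]
  exact forall_congr' fun B => sat_congr_boxAtomic X w Γ Γ' hΓ ψ hψ.2 B

/-! ### Construction of stable expansions -/

def bd : Formula S → ℕ
  | .atom _ _ => 0
  | .eq _ _ => 0
  | .not φ => bd φ
  | .and φ ψ => max (bd φ) (bd ψ)
  | .ex _ φ => bd φ
  | .box φ => bd φ + 1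

theorem bd_subst (φ : Formula S) (β) : bd (φ.subst β) = bd φ := by
  induction φ generalizing β <;> simp_all [bd, Formula.subst]

theorem bd_obj (φ : Formula S) (h : φ.isObjective) : bd φ = 0 := by
  induction φ <;> simp_all [bd, Formula.isObjective]

theorem sat_congr_bd (X : Sem) (w : Interp S) (Γ Γ' : Set (Formula S)) (n : ℕ)
    (hΓ : ∀ φ : Formula S, bd φ < n → (φ ∈ Γ ↔ φ ∈ Γ'))
    (φ : Formula S) (h : bd φ ≤ n) (B : ℕ → w.U) :
    Sat X w Γ φ B ↔ Sat X w Γ' φ B := by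
  induction φ generalizing B with
  | atom p ts => simp only [Sat]
  | eq s t => simp only [Sat]
  | not φ ih => simp only [Sat, ih h]
  | and φ ψ ih ih' =>
    simp only [bd, max_le_iff] at h
    simp only [Sat, ih h.1, ih' h.2]
  | ex x φ ih => simp only [Sat, ih h]
  | box φ =>
    simp only [bd] at h
    have key : ∀ β, φ.subst β ∈ Γ ↔ φ.subst β ∈ Γ' := by
      intro β
      exact hΓ _ (by rw [bd_subst]; omega)
    cases X <;> simp only [Sat, key]

def stage (X : Sem) (T Φ : Set (Formula S)) : ℕ → Set (Formula S)
  | 0 => T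
  | n + 1 => {φ | ∀ w : Interp S, ModelsT X w T Φ → ModelsF X w (stage X T Φ n) φ}

theorem stage_stab (X : Sem) (T Φ : Set (Formula S)) (k : ℕ) :
    ∀ (φ : Formula S), bd φ = k → ∀ n, k < n →
      (φ ∈ stage X T Φ n ↔ φ ∈ stage X T Φ (k + 1)) := by
  induction k using Nat.strong_induction_on with
  | _ k ih =>
    intro φ hφ n hn
    obtain ⟨m, rfl⟩ : ∃ m, n = m + 1 := ⟨n - 1, by omega⟩
    simp only [stage, Set.mem_setOf_eq]
    refine forall₂_congr fun w _ => forall_congr' fun B => ?_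
    refine sat_congr_bd X w _ _ k (fun ψ hψ => ?_) φ hφ.le B
    rw [ih _ hψ ψ rfl m (by omega), ih _ hψ ψ rfl k hψ]

theorem transfer (X : Sem) (Φ₁ Φ₂ T : Set (Formula S)) (hΦ : ∀ φ ∈ Φ₂, ugood φ)
    (hT : StableExp X Φ₁ T)
    (hE : ∀ φ : Formula S, φ.isObjective → φ.isGround →
      (Entails X Φ₁ T φ ↔ Entails X Φ₂ T φ)) :
    ∃ T', StableExp X Φ₂ T' ∧ ogOf T = ogOf T' := by
  have hmem : ∀ φ, φ ∈ T ↔ Entails X Φ₁ T φ := fun φ => by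
    conv_lhs => rw [hT]
    rfl
  set T' : Set (Formula S) := {φ | φ ∈ stage X T Φ₂ (bd φ + 1)} with hT'
  have hog : ∀ φ : Formula S, φ.isObjective → φ.isGround → (φ ∈ T ↔ φ ∈ T') := by
    intro φ ho hg
    rw [hmem, hE φ ho hg, hT', Set.mem_setOf_eq, bd_obj φ ho]
    rfl
  refine ⟨T', ?_, ?_⟩
  · unfold StableExp
    ext φ
    have h1 : φ ∈ T' ↔ ∀ w : Interp S, ModelsT X w T Φ₂ → ModelsF X w (stage X T Φ₂ (bd φ)) φ :=
      Iff.rfl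
    rw [h1]
    refine forall_congr' fun w => ?_
    rw [models_congr X w T T' Φ₂ hog hΦ]
    refine forall_congr' fun _ => forall_congr' fun B => ?_
    refine sat_congr_bd X w _ _ (bd φ) (fun ψ hψ => ?_) φ le_rfl B
    exact stage_stab X T Φ₂ (bd ψ) ψ rfl _ hψ
  · ext φ
    simp only [ogOf, Set.mem_setOf_eq]
    constructor
    · rintro ⟨h, ho, hg⟩
      exact ⟨(hog φ ho hg).1 h, ho, hg⟩
    · rintro ⟨h, ho, hg⟩
      exact ⟨(hog φ ho hg).2 h, ho, hg⟩

/-! ### Named substructure -/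

theorem named_func (w : Interp S) (f : S.Func) (us : Fin (S.arF f) → w.U)
    (h : ∀ i, IsNamed w (us i)) : IsNamed w (w.interpF f us) := by
  choose ts hg he using h
  refine ⟨.func f ts, hg, ?_⟩
  simp only [Term.evalG, Term.eval]
  congr 1
  funext i
  exact he i

def namedSub (w : Interp S) (h : ∃ k, IsNamed w k) : Interp S where
  U := {k : w.U // IsNamed w k}
  nonempty := ⟨⟨h.choose, h.choose_spec⟩⟩
  interpF f us := ⟨w.interpF f (fun i => (us i).1), named_func w f _ (fun i => (us i).2)⟩
  interpP p us := w.interpP p (fun i => (us i).1)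

theorem namedSub_eval (w : Interp S) (h) (B : ℕ → (namedSub w h).U) (t : Term S) :
    (t.eval (namedSub w h) B).1 = t.eval w (fun x => (B x).1) := by
  induction t with
  | var x => rfl
  | func f ts ih =>
    simp only [Term.eval, namedSub]
    congr 1
    funext i
    exact ih i

theorem namedSub_evalG (w : Interp S) (h) (t : Term S) (ht : t.isGround) :
    (Term.evalG (namedSub w h) t).1 = Term.evalG w t := by
  rw [Term.evalG, namedSub_eval]
  exact (evalG_eq w _ t ht).symm

theorem namedSub_named (w : Interp S) (h) (k : (namedSub w h).U) : IsNamed (namedSub w h) k := by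
  obtain ⟨t, ht, he⟩ := k.2
  exact ⟨t, ht, Subtype.ext ((namedSub_evalG w h t ht).trans he)⟩

theorem namedSub_assoc (w : Interp S) (h) (B : ℕ → (namedSub w h).U) (β) :
    Assoc (namedSub w h) B β ↔ Assoc w (fun x => (B x).1) β := by
  refine forall_congr' fun x => and_congr ?_ ?_
  · have h1 := namedSub_named w h (B x)
    have h2 : IsNamed w (B x).1 := (B x).2
    simp only [h1, h2]
  · refine forall₂_congr fun t _ => and_congr_right fun ht => ?_
    rw [← namedSub_evalG w h t ht]
    exact Subtype.ext_iff

theorem namedSub_sat (X : Sem) (w : Interp S) (h) (Γ : Set (Formula S)) (φ : Formula S)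
    (hφ : qf φ) (B : ℕ → (namedSub w h).U) :
    Sat X (namedSub w h) Γ φ B ↔ Sat X w Γ φ (fun x => (B x).1) := by
  induction φ with
  | atom p ts =>
    simp only [Sat, ← namedSub_eval]
    rfl
  | eq s t =>
    simp only [Sat, ← namedSub_eval]
    exact Subtype.ext_iff
  | not φ ih => simp only [Sat, ih hφ]
  | and φ ψ ih ih' => simp only [Sat, ih hφ.1, ih' hφ.2]
  | ex x φ => exact hφ.elim
  | box φ => cases X <;> simp only [Sat, namedSub_assoc]

theorem qf_of_ground (φ : Formula S) (h : φ.isGround) : qf φ := by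
  induction φ <;> simp_all [qf, Formula.isGround]

theorem sat_og_indep (X : Sem) (w : Interp S) (Γ : Set (Formula S)) (φ : Formula S)
    (ho : φ.isObjective) (hg : φ.isGround) (B B' : ℕ → w.U) :
    Sat X w Γ φ B ↔ Sat X w Γ φ B' := by
  induction φ with
  | atom p ts =>
    simp only [Sat]
    have : (fun i => (ts i).eval w B) = (fun i => (ts i).eval w B') :=
      funext fun i => eval_ground w B B' _ (hg i)
    rw [this]
  | eq s t =>
    simp only [Sat]
    rw [eval_ground w B B' _ hg.1, eval_ground w B B' _ hg.2]
  | not φ ih => simp only [Sat, ih ho hg]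
  | and φ ψ ih ih' => simp only [Sat, ih ho.1 hg.1, ih' ho.2 hg.2]
  | ex x φ => exact hg.elim
  | box φ => exact ho.elim

/-- every variable of every atom is interpreted by a named individual -/
def AllNamed (w : Interp S) : Prop :=
  ∀ (B : ℕ → w.U) (a : PAtom S) (x : ℕ), a.hasVar x → IsNamed w (B x)

theorem exists_allNamed (X : Sem) (P : Program S) (hs : fullSig P) (hg : goodSig P)
    (Φ T : Set (Formula S)) (hΦ : ∀ φ ∈ Φ, ugood φ) (w : Interp S) (hw : ModelsT X w T Φ) :
    ∃ w' : Interp S, ModelsT X w' T Φ ∧ AllNamed w' ∧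
      ∀ φ : Formula S, φ.isObjective → φ.isGround → (ModelsF X w' T φ → ModelsF X w T φ) := by
  by_cases hn : ∃ k, IsNamed w k
  · refine ⟨namedSub w hn, ?_, fun B a x _ => namedSub_named w hn _, ?_⟩
    · intro φ hφ
      have := hw φ hφ
      obtain ⟨vs, ψ, rfl, hψ⟩ := hΦ φ hφ
      rw [models_uclosure] at this ⊢
      intro B
      rw [namedSub_sat X w hn T ψ hψ.1]
      exact this _
    · intro φ ho hgr h B
      have := h (fun _ => (namedSub w hn).dflt)
      rw [namedSub_sat X w hn T φ (qf_of_ground φ hgr)] at this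
      exact (sat_og_indep X w T φ ho hgr _ _).1 this
  · refine ⟨w, hw, ?_, fun φ _ _ h => h⟩
    rintro B a x ⟨i, _⟩
    exfalso
    obtain ⟨f, _, hf⟩ := hg ⟨a.p, hs.2 _, i.pos⟩
    apply hn
    exact ⟨_, .func f (fun j => (Fin.elim0 (hf ▸ j))), fun j => (Fin.elim0 (hf ▸ j)), rfl⟩

/-- Entailment equivalence from a weak theory `Φw` and a stronger theory `Φs`. -/
theorem entails_equiv (X : Sem) (P : Program S) (hs : fullSig P) (hg : goodSig P)
    (Φw Φs T : Set (Formula S)) (hΦ : ∀ φ ∈ Φw, ugood φ)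
    (h1 : ∀ w : Interp S, ModelsT X w T Φs → ModelsT X w T Φw)
    (h2 : ∀ w : Interp S, AllNamed w → ModelsT X w T Φw → ModelsT X w T Φs)
    (φ : Formula S) (ho : φ.isObjective) (hgr : φ.isGround) :
    Entails X Φw T φ ↔ Entails X Φs T φ := by
  constructor
  · intro h w hw
    exact h w (h1 w hw)
  · intro h w hw
    obtain ⟨w', hw', hn, ht⟩ := exists_allNamed X P hs hg Φw T hΦ w hw
    exact ht φ ho hgr (h w' (h2 w' hn hw'))

/-! ### Boxes at named atoms -/

def GoodN (w : Interp S) (B : ℕ → w.U) (β : ℕ → Option (Term S)) (a : PAtom S) : Prop :=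
  ∀ x, a.hasVar x → ∃ s, β x = some s ∧ s.isGround ∧ Term.evalG w s = B x

theorem goodN_of_assoc (w : Interp S) (hn : AllNamed w) (B : ℕ → w.U) (β) (h : Assoc w B β)
    (a : PAtom S) : GoodN w B β a := by
  intro x hx
  obtain ⟨s, hs⟩ := Option.isSome_iff_exists.1 ((h x).1 (hn B a x hx))
  exact ⟨s, hs, (h x).2 s hs⟩

theorem atom_ground_closed (p : S.Pred) (ts : Fin (S.arP p) → Term S)
    (h : ∀ i, (ts i).isGround) : (Formula.atom p ts).closed := by
  rintro x ⟨i, hi⟩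
  exact noVar_of_ground _ (h i) x hi

theorem goodN_closed (w : Interp S) (B : ℕ → w.U) (β) (a : PAtom S) (h : GoodN w B β a) :
    (a.toFormula.subst β).closed := by
  apply atom_ground_closed
  intro i
  apply subst_isGround
  intro x hx
  obtain ⟨s, hs, hg, _⟩ := h x ⟨i, hx⟩
  exact ⟨s, hs, hg⟩

theorem goodN_sat (X : Sem) (w : Interp S) (Γ) (B B' : ℕ → w.U) (β) (a : PAtom S)
    (h : GoodN w B β a) :
    Sat X w Γ (a.toFormula.subst β) B' ↔ Sat X w Γ a.toFormula B := by
  simp only [PAtom.toFormula, Formula.subst, Sat]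
  have : (fun i => ((a.args i).subst β).eval w B') = (fun i => (a.args i).eval w B) :=
    funext fun i => eval_subst w B B' β _ (fun x hx => h x ⟨i, hx⟩)
  rw [this]

def UNAin (w : Interp S) (T : Set (Formula S)) : Prop :=
  ∀ t₁ t₂ : Term S, t₁.isGround → t₂.isGround → Term.evalG w t₁ = Term.evalG w t₂ →
    t₁ = t₂ ∨ Formula.eq t₁ t₂ ∈ T

theorem una_in (X : Sem) (P : Program S) (hs : fullSig P) (w : Interp S) (T : Set (Formula S))
    (h : ∀ φ ∈ UNAax P, ModelsF X w T φ) : UNAin w T := by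
  intro t₁ t₂ h₁ h₂ he
  by_cases hne : t₁ = t₂
  · exact Or.inl hne
  · right
    have := h _ ⟨t₁, t₂, isNameOf_of_ground _ hs.1 _ h₁, isNameOf_of_ground _ hs.1 _ h₂, hne, rfl⟩
      (fun _ => w.dflt)
    rw [sat_imp, sat_not, sat_not, sat_box_self] at this
    · by_contra hc
      exact this hc he
    · intro β
      simp only [Formula.subst, subst_ground β _ h₁, subst_ground β _ h₂]
    · rintro x (hx | hx)
      · exact noVar_of_ground _ h₁ x hx
      · exact noVar_of_ground _ h₂ x hx

theorem mem_congr (X : Sem) (Φ T : Set (Formula S)) (hT : StableExp X Φ T) (a : PAtom S)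
    (β β' : ℕ → Option (Term S))
    (h : ∀ x, a.hasVar x → ∃ s s', β x = some s ∧ β' x = some s' ∧
      (s = s' ∨ Formula.eq s s' ∈ T)) :
    a.toFormula.subst β ∈ T ↔ a.toFormula.subst β' ∈ T := by
  have hmem : ∀ φ, φ ∈ T ↔ Entails X Φ T φ := fun φ => by
    conv_lhs => rw [hT]
    rfl
  rw [hmem, hmem]
  refine forall₂_congr fun w hw => forall_congr' fun B => ?_
  simp only [PAtom.toFormula, Formula.subst, Sat]
  have : (fun i => ((a.args i).subst β).eval w B) = (fun i => ((a.args i).subst β').eval w B) := by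
    funext i
    apply eval_subst_congr
    intro x hx
    obtain ⟨s, s', hs, hs', he⟩ := h x ⟨i, hx⟩
    refine ⟨s, s', hs, hs', ?_⟩
    rcases he with rfl | he
    · rfl
    · have := (hmem _).1 he w hw B
      simpa only [Sat] using this
  rw [this]

theorem box_char (X : Sem) (Φ T : Set (Formula S)) (hT : StableExp X Φ T) (w : Interp S)
    (hu : UNAin w T) (B : ℕ → w.U) (β) (a : PAtom S) (h : GoodN w B β a) :
    Sat X w T (.box a.toFormula) B ↔ a.toFormula.subst β ∈ T := by
  have key : ∀ β', Assoc w B β' → ((a.toFormula.subst β').closed ∧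
      (a.toFormula.subst β' ∈ T ↔ a.toFormula.subst β ∈ T)) := by
    intro β' hβ'
    have h' : GoodN w B β' a := by
      intro x hx
      obtain ⟨s, hs, hg, he⟩ := h x hx
      obtain ⟨s', hs'⟩ := Option.isSome_iff_exists.1 ((hβ' x).1 ⟨s, hg, he⟩)
      exact ⟨s', hs', (hβ' x).2 s' hs'⟩
    refine ⟨goodN_closed w B β' a h', mem_congr X Φ T hT a β' β ?_⟩
    intro x hx
    obtain ⟨s, hs, hg, he⟩ := h x hx
    obtain ⟨s', hs', hg', he'⟩ := h' x hx
    exact ⟨s', s, hs', hs, hu s' s hg' hg (he'.trans he.symm)⟩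
  obtain ⟨β₀, h₀⟩ := exists_assoc w B
  cases X
  · simp only [Sat]
    constructor
    · rintro ⟨β', hβ', _, hm⟩
      exact (key β' hβ').2.1 hm
    · intro hm
      exact ⟨β₀, h₀, (key β₀ h₀).1, (key β₀ h₀).2.2 hm⟩
  · simp only [Sat]
    constructor
    · intro hm
      exact (key β₀ h₀).2.1 (hm β₀ h₀).2
    · intro hm β' hβ'
      exact ⟨(key β' hβ').1, (key β' hβ').2.2 hm⟩

/-! ### Part 1 -/

theorem EH_to_EB (X : Sem) (P : Program S) (hP : progNormal P) (w : Interp S)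
    (T : Set (Formula S)) (h : ModelsT X w T (tauEH P)) : ModelsT X w T (tauEB P) := by
  rintro φ (⟨r, hr, rfl⟩ | hφ)
  · have := h _ (Or.inl ⟨r, hr, rfl⟩)
    rw [models_embEH] at this
    rw [models_embEB]
    intro B hb hc
    have h3 := this B hb hc
    obtain ⟨a, ha⟩ := List.length_eq_one_iff.1 (hP r hr)
    simp only [ha, List.map_cons, List.map_nil, disjOf, orAll, sat_and] at h3 ⊢
    exact h3.1
  · exact h φ (Or.inr hφ)

theorem EB_to_EH (X : Sem) (P : Program S) (hP : progNormal P) (hs : fullSig P)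
    (Φ T : Set (Formula S)) (hT : StableExp X Φ T)
    (hΦ : ∀ w : Interp S, ModelsT X w T Φ → ModelsT X w T (tauEB P))
    (w : Interp S) (hn : AllNamed w) (hw : ModelsT X w T (tauEB P)) :
    ModelsT X w T (tauEH P) := by
  have hmem : ∀ φ, φ ∈ T ↔ Entails X Φ T φ := fun φ => by
    conv_lhs => rw [hT]
    rfl
  have una : ∀ w : Interp S, ModelsT X w T (tauEB P) → UNAin w T := fun w hw =>
    una_in X P hs w T (fun φ hφ => hw φ (Or.inr hφ))
  rintro φ (⟨r, hr, rfl⟩ | hφ)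
  swap
  · exact hw φ (Or.inr hφ)
  have hrw := hw _ (Or.inl ⟨r, hr, rfl⟩)
  rw [models_embEB] at hrw
  rw [models_embEH]
  intro B hb hc
  have h3 := hrw B hb hc
  obtain ⟨a, ha⟩ := List.length_eq_one_iff.1 (hP r hr)
  simp only [ha, List.map_cons, List.map_nil, disjOf, orAll, sat_and] at h3 ⊢
  refine ⟨h3, ?_⟩
  obtain ⟨β, hβ⟩ := exists_assoc w B
  have hN := goodN_of_assoc w hn B β hβ
  have hbox := fun a => box_char X Φ T hT w (una w hw) B β a (hN a)
  rw [hbox, hmem]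
  intro w' hw' B''
  have hEB := hΦ w' hw'
  set B' : ℕ → w'.U := fun x => ((β x).map (Term.evalG w')).getD w'.dflt with hB'
  have hN' : ∀ a, GoodN w' B' β a := by
    intro a x hx
    obtain ⟨s, hs, hg, _⟩ := hN a x hx
    exact ⟨s, hs, hg, by simp [hB', hs]⟩
  have hbox' := fun a => box_char X Φ T hT w' (una w' hEB) B' β a (hN' a)
  have hr' := hEB _ (Or.inl ⟨r, hr, rfl⟩)
  rw [models_embEB] at hr'
  have h4 := hr' B' ?_ ?_
  · simp only [ha, List.map_cons, List.map_nil, disjOf, orAll] at h4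
    exact (goodN_sat X w' T B' B'' β a (hN' a)).2 h4
  · intro b hb'
    have hm := (hbox b).1 (hb b hb').2
    exact ⟨(goodN_sat X w' T B' B' β b (hN' b)).1 ((hmem _).1 hm w' hw' B'), (hbox' b).2 hm⟩
  · intro c hc' hcs
    exact hc c hc' ((hbox c).2 ((hbox' c).1 hcs))

/-! ### Part 2 -/

theorem HPv_to_EBv (X : Sem) (P : Program S) (w : Interp S)
    (T : Set (Formula S)) (h : ModelsT X w T (tauHPv P)) : ModelsT X w T (tauEBv P) := by
  rintro φ ((⟨r, hr, rfl⟩ | hφ) | hφ)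
  · have := h _ (Or.inl (Or.inl ⟨r, hr, rfl⟩))
    rw [models_embHP] at this
    rw [models_embEB]
    exact fun B hb hc => this B (fun b h => (hb b h).1) hc
  · exact h φ (Or.inl (Or.inr hφ))
  · exact h φ (Or.inr hφ)

theorem EBv_to_HPv (X : Sem) (P : Program S) (hs : fullSig P) (w : Interp S)
    (T : Set (Formula S)) (hn : AllNamed w) (h : ModelsT X w T (tauEBv P)) :
    ModelsT X w T (tauHPv P) := by
  rintro φ ((⟨r, hr, rfl⟩ | hφ) | hφ)
  · have := h _ (Or.inl (Or.inl ⟨r, hr, rfl⟩))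
    rw [models_embEB] at this
    rw [models_embHP]
    intro B hb hc
    refine this B (fun b hb' => ⟨hb b hb', ?_⟩) hc
    have key : ∀ β, Assoc w B β → (b.toFormula.subst β).closed ∧ b.toFormula.subst β ∈ T := by
      intro β hβ
      have hN := goodN_of_assoc w hn B β hβ b
      have hgr : ∀ i, ((b.args i).subst β).isGround := by
        intro i
        apply subst_isGround
        intro x hx
        obtain ⟨s, hs, hg, _⟩ := hN x ⟨i, hx⟩
        exact ⟨s, hs, hg⟩
      have hcl := goodN_closed w B β b hN
      refine ⟨hcl, ?_⟩
      have hp := h _ (Or.inl (Or.inr ⟨⟨b.p, fun i => (b.args i).subst β⟩, hs.2 _,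
        fun i => isNameOf_of_ground _ hs.1 _ (hgr i), rfl⟩)) B
      rw [sat_imp] at hp
      have hp2 := hp ((goodN_sat X w T B B β b hN).2 (hb b hb'))
      rw [sat_box_self] at hp2
      · exact hp2
      · intro β'
        simp only [PAtom.toFormula, Formula.subst]
        congr 1
        funext i
        exact subst_ground β' _ (hgr i)
      · exact hcl
    cases X
    · obtain ⟨β₀, h₀⟩ := exists_assoc w B
      simp only [Sat]
      exact ⟨β₀, h₀, key β₀ h₀⟩
    · simp only [Sat]
      exact key
  · exact h φ (Or.inl (Or.inr hφ))
  · exact h φ (Or.inr hφ)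

end Aux

/-- For every normal program `P`, `τ_EB(P) ≡ˣ_og τ_EH(P)`;
for every disjunctive program `P`, `τ^∨_HP(P) ≡ˣ_og τ^∨_EB(P)`. -/
theorem stmt6 {S : Sig} (X : Sem) :
    (∀ P : Program S, progWf P → progNormal P → fullSig P → goodSig P →
        ExpEquivSel X ogOf (tauEB P) (tauEH P)) ∧
    (∀ P : Program S, progWf P → fullSig P → goodSig P →
        ExpEquivSel X ogOf (tauHPv P) (tauEBv P)) := by
  refine ⟨fun P _ hP hs hg => ⟨fun T hT => ?_, fun T hT => ?_⟩,
    fun P _ hs hg => ⟨fun T hT => ?_, fun T hT => ?_⟩⟩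
  · exact Aux.transfer X _ _ T (Aux.ugood_tauEH P) hT
      (Aux.entails_equiv X P hs hg _ _ T (Aux.ugood_tauEB P)
        (fun w => Aux.EH_to_EB X P hP w T)
        (Aux.EB_to_EH X P hP hs _ T hT (fun _ h => h)))
  · obtain ⟨T', h1, h2⟩ := Aux.transfer X _ _ T (Aux.ugood_tauEB P) hT
      (fun φ ho hgr => (Aux.entails_equiv X P hs hg _ _ T (Aux.ugood_tauEB P)
        (fun w => Aux.EH_to_EB X P hP w T)
        (Aux.EB_to_EH X P hP hs _ T hT (fun w => Aux.EH_to_EB X P hP w T)) φ ho hgr).symm)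
    exact ⟨T', h1, h2.symm⟩
  · exact Aux.transfer X _ _ T (Aux.ugood_tauEBv P) hT
      (fun φ ho hgr => (Aux.entails_equiv X P hs hg _ _ T (Aux.ugood_tauEBv P)
        (fun w => Aux.HPv_to_EBv X P w T)
        (fun w => Aux.EBv_to_HPv X P hs w T) φ ho hgr).symm)
  · obtain ⟨T', h1, h2⟩ := Aux.transfer X _ _ T (Aux.ugood_tauHPv P) hT
      (Aux.entails_equiv X P hs hg _ _ T (Aux.ugood_tauEBv P)
        (fun w => Aux.HPv_to_EBv X P w T)
        (fun w => Aux.EBv_to_HPv X P hs w T))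
    exact ⟨T', h1, h2.symm⟩
end

section
/- For every safe normal logic program P and X ∈ {E,A}, τ_EB(P) ≡ˣ τ_EH(P), i.e., τ_EB(P) and τ_EH(P) have exactly the same stableˣ expansions. -/
set_option autoImplicit false

section Helpers

variable {S : Sig}

theorem hp_imp (X : Sem) (w : Interp S) (T : Set (Formula S)) (φ ψ : Formula S) (B : ℕ → w.U) :
    Sat X w T (Formula.imp φ ψ) B ↔ (Sat X w T φ B → Sat X w T ψ B) := by
  simp only [Formula.imp, Sat]; tauto

theorem hp_andAll (X : Sem) (w : Interp S) (T : Set (Formula S)) (B : ℕ → w.U)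
    (l : List (Formula S)) : ∀ φ : Formula S,
    Sat X w T (andAll φ l) B ↔ (Sat X w T φ B ∧ ∀ a ∈ l, Sat X w T a B) := by
  induction l with
  | nil => intro φ; simp [andAll]
  | cons a l ih => intro φ; rw [andAll, ih]; simp [Sat, and_assoc]

theorem hp_impOf (X : Sem) (w : Interp S) (T : Set (Formula S)) (B : ℕ → w.U)
    (l : List (Formula S)) (c : Formula S) :
    Sat X w T (impOf l c) B ↔ ((∀ a ∈ l, Sat X w T a B) → Sat X w T c B) := by
  cases l with
  | nil => simp [impOf]
  | cons a l => rw [impOf, hp_imp, hp_andAll]; simp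

theorem hp_all (X : Sem) (w : Interp S) (T : Set (Formula S)) (x : ℕ) (φ : Formula S) :
    ModelsF X w T (Formula.all x φ) ↔ ModelsF X w T φ := by
  constructor
  · intro h B
    have := h B
    simp only [Formula.all, Sat, not_exists, not_not] at this
    have h2 := this (B x)
    rwa [Function.update_eq_self] at h2
  · intro h B
    simp only [Formula.all, Sat, not_exists, not_not]
    intro u
    exact h _

theorem hp_uclosure (X : Sem) (w : Interp S) (T : Set (Formula S)) (vs : List ℕ) (φ : Formula S) :
    ModelsF X w T (uclosure vs φ) ↔ ModelsF X w T φ := by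
  induction vs with
  | nil => rfl
  | cons x vs ih =>
    change ModelsF X w T (Formula.all x (uclosure vs φ)) ↔ _
    rw [hp_all, ih]

/-- ground terms: evaluation does not depend on assignment -/
theorem hp_eval_ground (w : Interp S) (t : Term S) (B B' : ℕ → w.U) (h : t.isGround) :
    t.eval w B = t.eval w B' := by
  induction t with
  | var x => exact h.elim
  | func f ts ih =>
    simp only [Term.eval]
    congr 1
    funext i
    exact ih i (h i)

theorem hp_subst_ground (t : Term S) (β : ℕ → Option (Term S)) (h : t.isGround) :
    t.subst β = t := by
  induction t with
  | var x => exact h.elim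
  | func f ts ih =>
    simp only [Term.subst]
    congr 1
    funext i
    exact ih i (h i)

theorem hp_ground_noVar (t : Term S) (h : t.isGround) (x : ℕ) : ¬ t.hasVar x := by
  induction t with
  | var x => exact h.elim
  | func f ts ih =>
    rintro ⟨i, hi⟩
    exact ih i (h i) hi

theorem hp_ground_name (P : Program S) (hfull : fullSig P) (t : Term S) (h : t.isGround) :
    t.isNameOf (progFuncs P) := by
  induction t with
  | var x => exact h.elim
  | func f ts ih => exact ⟨hfull.1 f, fun i => ih i (h i)⟩

theorem hp_subst_isGround (t : Term S) (β : ℕ → Option (Term S))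
    (h : ∀ x, t.hasVar x → ∃ s, β x = some s ∧ s.isGround) : (t.subst β).isGround := by
  induction t with
  | var x =>
    obtain ⟨s, hs, hg⟩ := h x rfl
    simpa [Term.subst, hs] using hg
  | func f ts ih =>
    intro i
    exact ih i (fun x hx => h x ⟨i, hx⟩)

theorem hp_subst_congr (t : Term S) (β β' : ℕ → Option (Term S))
    (h : ∀ x, t.hasVar x → β x = β' x) : t.subst β = t.subst β' := by
  induction t with
  | var x => simp [Term.subst, h x rfl]
  | func f ts ih =>
    simp only [Term.subst]
    congr 1
    funext i
    exact ih i (fun x hx => h x ⟨i, hx⟩)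

theorem hp_subst_eval (w : Interp S) (t : Term S) (β : ℕ → Option (Term S)) (B B' : ℕ → w.U)
    (h : ∀ x, t.hasVar x → ∃ s, β x = some s ∧ s.isGround ∧ Term.evalG w s = B' x) :
    (t.subst β).eval w B = t.eval w B' := by
  induction t with
  | var x =>
    obtain ⟨s, hs, hg, he⟩ := h x rfl
    simp only [Term.subst, hs, Option.getD_some, Term.eval]
    rw [← he]
    exact hp_eval_ground w s _ _ hg
  | func f ts ih =>
    simp only [Term.subst, Term.eval]
    congr 1
    funext i
    exact ih i (fun x hx => h x ⟨i, hx⟩)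

theorem hp_subst_hasVar (t : Term S) (β : ℕ → Option (Term S)) (x : ℕ) (h : t.hasVar x)
    (hβ : β x = none) : (t.subst β).hasVar x := by
  induction t with
  | var y =>
    have : y = x := h
    subst this
    simp [Term.subst, hβ, Term.hasVar]
  | func f ts ih =>
    obtain ⟨i, hi⟩ := h
    exact ⟨i, ih i hi⟩

theorem hp_assoc_exists (w : Interp S) (B : ℕ → w.U) : ∃ β, Assoc w B β := by
  classical
  refine ⟨fun x => if h : IsNamed w (B x) then some h.choose else none, ?_⟩
  intro x
  by_cases h : IsNamed w (B x)
  · refine ⟨fun _ => by simp [h], fun t ht => ?_⟩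
    simp only [h, dif_pos, Option.some.injEq] at ht
    rw [← ht]
    exact h.choose_spec
  · exact ⟨fun h' => (h h').elim, fun t ht => by simp [h] at ht⟩

theorem hp_assoc_get (w : Interp S) (B : ℕ → w.U) (β : ℕ → Option (Term S)) (hβ : Assoc w B β)
    (x : ℕ) (hx : IsNamed w (B x)) :
    ∃ s, β x = some s ∧ s.isGround ∧ Term.evalG w s = B x := by
  obtain ⟨s, hs⟩ := Option.isSome_iff_exists.1 ((hβ x).1 hx)
  exact ⟨s, hs, (hβ x).2 s hs⟩

theorem hp_atom_closed (a : PAtom S) (β : ℕ → Option (Term S))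
    (h : ∀ x, a.hasVar x → ∃ s, β x = some s ∧ s.isGround) : (a.toFormula.subst β).closed := by
  rintro x ⟨i, hi⟩
  exact hp_ground_noVar _ (hp_subst_isGround (a.args i) β (fun y hy => h y ⟨i, hy⟩)) x hi

theorem hp_box_named (X : Sem) (w : Interp S) (T : Set (Formula S)) (B : ℕ → w.U) (a : PAtom S)
    (h : Sat X w T (Formula.box a.toFormula) B) (x : ℕ) (hx : a.hasVar x) : IsNamed w (B x) := by
  have key : ∃ β, Assoc w B β ∧ (a.toFormula.subst β).closed := by
    cases X with
    | any =>
      simp only [Sat] at h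
      obtain ⟨β, h1, h2, _⟩ := h
      exact ⟨β, h1, h2⟩
    | all =>
      simp only [Sat] at h
      obtain ⟨β, h1⟩ := hp_assoc_exists w B
      exact ⟨β, h1, (h β h1).1⟩
  obtain ⟨β, hA, hc⟩ := key
  cases hb : β x with
  | some s => exact ⟨s, (hA x).2 s hb⟩
  | none =>
    obtain ⟨i, hi⟩ := hx
    exact (hc x ⟨i, hp_subst_hasVar _ β x hi hb⟩).elim

/-- names equal in a model of UNA are equal in all models -/
theorem hp_una (X : Sem) (P : Program S) (hfull : fullSig P) (Φ T : Set (Formula S))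
    (hT : StableExp X Φ T) (w : Interp S) (hw : ModelsT X w T (UNAax P)) (t t' : Term S)
    (ht : t.isGround) (ht' : t'.isGround) (he : Term.evalG w t = Term.evalG w t')
    (w' : Interp S) (hw' : ModelsT X w' T Φ) : Term.evalG w' t = Term.evalG w' t' := by
  by_cases hne : t = t'
  · rw [hne]
  have h1 := hw _ ⟨t, t', hp_ground_name P hfull t ht, hp_ground_name P hfull t' ht', hne, rfl⟩
    (fun _ => w.dflt)
  rw [hp_imp] at h1
  have h2 : Sat X w T (Formula.box (Formula.eq t t')) (fun _ => w.dflt) := by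
    by_contra hb
    exact h1 hb he
  have h3 : Formula.eq t t' ∈ T := by
    have e : ∀ β, (Formula.eq t t').subst β = Formula.eq t t' := by
      intro β
      simp only [Formula.subst, hp_subst_ground _ β ht, hp_subst_ground _ β ht']
    cases X with
    | any =>
      simp only [Sat, e] at h2
      obtain ⟨β, _, _, h⟩ := h2
      exact h
    | all =>
      simp only [Sat, e] at h2
      obtain ⟨β, hβ⟩ := hp_assoc_exists w (fun _ => w.dflt)
      exact (h2 β hβ).2
  unfold StableExp at hT
  rw [hT] at h3
  have h4 := h3 w' hw' (fun _ => w'.dflt)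
  exact h4

theorem hp_eval_two (w : Interp S) (t : Term S) (β β' : ℕ → Option (Term S)) (B : ℕ → w.U)
    (h : ∀ x, t.hasVar x → ∃ s s', β x = some s ∧ β' x = some s' ∧ s.isGround ∧ s'.isGround ∧
      Term.evalG w s = Term.evalG w s') :
    (t.subst β).eval w B = (t.subst β').eval w B := by
  induction t with
  | var x =>
    obtain ⟨s, s', hs, hs', hg, hg', he⟩ := h x rfl
    simp only [Term.subst, hs, hs', Option.getD_some]
    rw [hp_eval_ground w s _ (fun _ => w.dflt) hg, hp_eval_ground w s' _ (fun _ => w.dflt) hg']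
    exact he
  | func f ts ih =>
    simp only [Term.subst, Term.eval]
    congr 1
    funext i
    exact ih i (fun x hx => h x ⟨i, hx⟩)

theorem hp_transfer (X : Sem) (P : Program S) (hfull : fullSig P) (Φ T : Set (Formula S))
    (hT : StableExp X Φ T) (w : Interp S) (hw : ModelsT X w T (UNAax P)) (B : ℕ → w.U)
    (β β' : ℕ → Option (Term S)) (hβ : Assoc w B β) (hβ' : Assoc w B β') (a : PAtom S)
    (ha : ∀ x, a.hasVar x → IsNamed w (B x)) (hm : a.toFormula.subst β ∈ T) :
    a.toFormula.subst β' ∈ T := by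
  have hT' := hT
  unfold StableExp at hT'
  rw [hT'] at hm ⊢
  intro w' hw' B'
  have h1 := hm w' hw' B'
  simp only [PAtom.toFormula, Formula.subst, Sat] at h1 ⊢
  convert h1 using 2 with i
  refine (hp_eval_two w' (a.args i) β β' B' ?_).symm
  intro x hx
  obtain ⟨s, hs, hg, he⟩ := hp_assoc_get w B β hβ x (ha x ⟨i, hx⟩)
  obtain ⟨s', hs', hg', he'⟩ := hp_assoc_get w B β' hβ' x (ha x ⟨i, hx⟩)
  exact ⟨s, s', hs, hs', hg, hg',
    hp_una X P hfull Φ T hT w hw s s' hg hg' (he.trans he'.symm) w' hw'⟩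

theorem hp_box_iff (X : Sem) (P : Program S) (hfull : fullSig P) (Φ T : Set (Formula S))
    (hT : StableExp X Φ T) (w : Interp S) (hw : ModelsT X w T (UNAax P)) (B : ℕ → w.U)
    (β : ℕ → Option (Term S)) (hβ : Assoc w B β) (a : PAtom S)
    (ha : ∀ x, a.hasVar x → IsNamed w (B x)) :
    Sat X w T (Formula.box a.toFormula) B ↔ a.toFormula.subst β ∈ T := by
  have hc : ∀ γ, Assoc w B γ → (a.toFormula.subst γ).closed := by
    intro γ hγ
    refine hp_atom_closed a γ (fun x hx => ?_)
    obtain ⟨s, hs, hg, _⟩ := hp_assoc_get w B γ hγ x (ha x hx)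
    exact ⟨s, hs, hg⟩
  cases X with
  | any =>
    simp only [Sat]
    constructor
    · rintro ⟨γ, hγ, _, hm⟩
      exact hp_transfer _ P hfull Φ T hT w hw B γ β hγ hβ a ha hm
    · intro hm
      exact ⟨β, hβ, hc β hβ, hm⟩
  | all =>
    simp only [Sat]
    constructor
    · intro h
      exact (h β hβ).2
    · intro hm γ hγ
      exact ⟨hc γ hγ, hp_transfer _ P hfull Φ T hT w hw B β γ hβ hγ a ha hm⟩

theorem hp_body (X : Sem) (w : Interp S) (T : Set (Formula S)) (B : ℕ → w.U) (r : Rule S) :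
    (∀ a ∈ bodyE r, Sat X w T a B) ↔
      ((∀ b ∈ r.pos, Sat X w T b.toFormula B ∧ Sat X w T (Formula.box b.toFormula) B) ∧
       (∀ c ∈ r.neg, ¬ Sat X w T (Formula.box c.toFormula) B)) := by
  constructor
  · intro h
    refine ⟨fun b hb => ?_, fun c hc => ?_⟩
    · have := h (Formula.and b.toFormula (Formula.box b.toFormula))
        (List.mem_append_left _ (List.mem_map.2 ⟨b, hb, rfl⟩))
      rwa [Sat] at this
    · have := h (Formula.not (Formula.box c.toFormula))
        (List.mem_append_right _ (List.mem_map.2 ⟨c, hc, rfl⟩))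
      rwa [Sat] at this
  · rintro ⟨h1, h2⟩ a ha
    rcases List.mem_append.1 ha with ha | ha
    · obtain ⟨b, hb, rfl⟩ := List.mem_map.1 ha
      rw [Sat]
      exact h1 b hb
    · obtain ⟨c, hc, rfl⟩ := List.mem_map.1 ha
      rw [Sat]
      exact h2 c hc

theorem hp_EB (X : Sem) (w : Interp S) (T : Set (Formula S)) (r : Rule S) (h : PAtom S)
    (hh : r.head = [h]) : ModelsF X w T (embEB r) ↔
      ∀ B, (∀ a ∈ bodyE r, Sat X w T a B) → Sat X w T h.toFormula B := by
  rw [embEB, hp_uclosure]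
  simp only [ModelsF, hp_impOf, hh, List.map, disjOf, orAll]

theorem hp_EH (X : Sem) (w : Interp S) (T : Set (Formula S)) (r : Rule S) (h : PAtom S)
    (hh : r.head = [h]) : ModelsF X w T (embEH r) ↔
      ∀ B, (∀ a ∈ bodyE r, Sat X w T a B) →
        (Sat X w T h.toFormula B ∧ Sat X w T (Formula.box h.toFormula) B) := by
  rw [embEH, hp_uclosure]
  simp only [ModelsF, hp_impOf, hh, List.map, disjOf, orAll]
  simp only [Sat]

theorem hp_EH_EB (X : Sem) (P : Program S) (hn : progNormal P) (T : Set (Formula S))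
    (w : Interp S) (hw : ModelsT X w T (tauEH P)) : ModelsT X w T (tauEB P) := by
  rintro φ (⟨r, hr, rfl⟩ | hφ)
  · obtain ⟨h, hh⟩ := List.length_eq_one_iff.1 (hn r hr)
    rw [hp_EB X w T r h hh]
    intro B hB
    exact ((hp_EH X w T r h hh).1 (hw _ (Or.inl ⟨r, hr, rfl⟩)) B hB).1
  · exact hw _ (Or.inr hφ)

theorem hp_EB_EH (X : Sem) (P : Program S) (hn : progNormal P) (hsafe : progSafe P)
    (hfull : fullSig P) (Φ T : Set (Formula S)) (hT : StableExp X Φ T)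
    (hΦ : ∀ w : Interp S, ModelsT X w T Φ → ModelsT X w T (tauEB P))
    (w : Interp S) (hw : ModelsT X w T (tauEB P)) : ModelsT X w T (tauEH P) := by
  classical
  rintro φ (⟨r, hr, rfl⟩ | hφ)
  swap
  · exact hw _ (Or.inr hφ)
  obtain ⟨h, hh⟩ := List.length_eq_one_iff.1 (hn r hr)
  rw [hp_EH X w T r h hh]
  intro B hB
  refine ⟨(hp_EB X w T r h hh).1 (hw _ (Or.inl ⟨r, hr, rfl⟩)) B hB, ?_⟩
  obtain ⟨hpos, hneg⟩ := (hp_body X w T B r).1 hB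
  have hunaw : ModelsT X w T (UNAax P) := fun ψ hψ => hw ψ (Or.inr hψ)
  have hnamed : ∀ x, r.hasVar x → IsNamed w (B x) := by
    intro x hx
    obtain ⟨b, hb, hbx⟩ := hsafe r hr x hx
    exact hp_box_named X w T B b (hpos b hb).2 x hbx
  have mh : h ∈ r.atoms := by simp [Rule.atoms, hh]
  have mp : ∀ b ∈ r.pos, b ∈ r.atoms := fun b hb => by simp [Rule.atoms, hb]
  have mn : ∀ c ∈ r.neg, c ∈ r.atoms := fun c hc => by simp [Rule.atoms, hc]
  obtain ⟨β, hβ⟩ := hp_assoc_exists w B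
  have bx : ∀ a ∈ r.atoms, (Sat X w T (Formula.box a.toFormula) B ↔ a.toFormula.subst β ∈ T) :=
    fun a ha => hp_box_iff X P hfull Φ T hT w hunaw B β hβ a (fun x hx => hnamed x ⟨a, ha, hx⟩)
  rw [bx h mh]
  have hT' := hT
  unfold StableExp at hT'
  rw [hT']
  intro w' hw' B0
  have hEB := hΦ w' hw'
  have hunaw' : ModelsT X w' T (UNAax P) := fun ψ hψ => hEB ψ (Or.inr hψ)
  let B' : ℕ → w'.U := fun x => ((β x).map (Term.evalG w')).getD w'.dflt
  obtain ⟨γ, hγ⟩ := hp_assoc_exists w' B'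
  let β' : ℕ → Option (Term S) := fun x => (β x).or (γ x)
  have hβ' : Assoc w' B' β' := by
    intro x
    cases hx : β x with
    | none =>
      have e : β' x = γ x := by simp [β', hx]
      rw [e]
      exact hγ x
    | some s =>
      have e : β' x = some s := by simp [β', hx]
      rw [e]
      refine ⟨fun _ => rfl, fun t ht => ?_⟩
      cases ht
      exact ⟨((hβ x).2 s hx).1, by simp [B', hx]⟩
  have hget : ∀ x, r.hasVar x → ∃ s, β x = some s ∧ s.isGround ∧ Term.evalG w' s = B' x := by
    intro x hx
    obtain ⟨s, hs, hg, _⟩ := hp_assoc_get w B β hβ x (hnamed x hx)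
    exact ⟨s, hs, hg, by simp [B', hs]⟩
  have hsub : ∀ a ∈ r.atoms, a.toFormula.subst β' = a.toFormula.subst β := by
    intro a ha
    simp only [PAtom.toFormula, Formula.subst]
    congr 1
    funext i
    refine hp_subst_congr _ _ _ (fun x hx => ?_)
    obtain ⟨s, hs, _⟩ := hget x ⟨a, ha, i, hx⟩
    simp [β', hs]
  have bx' : ∀ a ∈ r.atoms, (Sat X w' T (Formula.box a.toFormula) B' ↔
      a.toFormula.subst β ∈ T) := by
    intro a ha
    rw [← hsub a ha]
    refine hp_box_iff X P hfull Φ T hT w' hunaw' B' β' hβ' a (fun x hx => ?_)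
    obtain ⟨s, _, hg, he⟩ := hget x ⟨a, ha, hx⟩
    exact ⟨s, hg, he⟩
  have sx : ∀ a ∈ r.atoms, (Sat X w' T (a.toFormula.subst β) B0 ↔ Sat X w' T a.toFormula B') := by
    intro a ha
    simp only [PAtom.toFormula, Formula.subst, Sat]
    have : (fun i => ((a.args i).subst β).eval w' B0) = (fun i => (a.args i).eval w' B') := by
      funext i
      exact hp_subst_eval w' _ β B0 B' (fun x hx => hget x ⟨a, ha, i, hx⟩)
    rw [this]
  rw [sx h mh]
  refine (hp_EB X w' T r h hh).1 (hEB _ (Or.inl ⟨r, hr, rfl⟩)) B' ?_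
  rw [hp_body]
  refine ⟨fun b hb => ?_, fun c hc => ?_⟩
  · have hm := (bx b (mp b hb)).1 (hpos b hb).2
    refine ⟨?_, (bx' b (mp b hb)).2 hm⟩
    rw [← sx b (mp b hb)]
    rw [hT'] at hm
    exact hm w' hw' B0
  · rw [bx' c (mn c hc), ← bx c (mn c hc)]
    exact hneg c hc

end Helpers

/-- For every safe normal program `P`, `τ_EB(P)` and `τ_EH(P)`
have exactly the same stableˣ expansions. -/
theorem stmt7 {S : Sig} (X : Sem) (P : Program S)
    (hwf : progWf P) (hnormal : progNormal P) (hsafe : progSafe P)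
    (hfull : fullSig P) (hgood : goodSig P) :
    ExpEquiv X (tauEB P) (tauEH P) := by
  intro T
  constructor
  · intro hT
    have hT' := hT
    unfold StableExp at hT' ⊢
    refine hT'.trans (Set.ext fun φ => ⟨fun h w hw => h w (hp_EH_EB X P hnormal T w hw), ?_⟩)
    intro h w hw
    exact h w (hp_EB_EH X P hnormal hsafe hfull _ T hT (fun _ h => h) w hw)
  · intro hT
    have hT' := hT
    unfold StableExp at hT' ⊢
    refine hT'.trans (Set.ext fun φ => ⟨?_, fun h w hw => h w (hp_EH_EB X P hnormal T w hw)⟩)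
    intro h w hw
    exact h w (hp_EB_EH X P hnormal hsafe hfull _ T hT
      (fun w' h => hp_EH_EB X P hnormal T w' h) w hw)
end

section
/- For every ground disjunctive logic program P and X ∈ {E,A}, τ^∨_HP(P) ≡ˣ τ^∨_EB(P), i.e., τ^∨_HP(P) and τ^∨_EB(P) have exactly the same stableˣ expansions. -/
set_option autoImplicit false

theorem sat_andAll {S : Sig} (X : Sem) (w : Interp S) (Γ : Set (Formula S)) (B : ℕ → w.U)
    (l : List (Formula S)) : ∀ φ : Formula S,
    Sat X w Γ (andAll φ l) B ↔ (Sat X w Γ φ B ∧ ∀ ψ ∈ l, Sat X w Γ ψ B) := by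
  induction l with
  | nil => intro φ; simp [andAll]
  | cons a l ih =>
    intro φ
    simp only [andAll, ih, Sat, List.forall_mem_cons, and_assoc]

theorem sat_impOf {S : Sig} (X : Sem) (w : Interp S) (Γ : Set (Formula S)) (B : ℕ → w.U)
    (l : List (Formula S)) (c : Formula S) :
    Sat X w Γ (impOf l c) B ↔ ((∀ ψ ∈ l, Sat X w Γ ψ B) → Sat X w Γ c B) := by
  cases l with
  | nil => simp [impOf]
  | cons a l =>
    simp only [impOf, Formula.imp, Sat, sat_andAll, List.forall_mem_cons]
    tauto

theorem isNameOf_full {S : Sig} (F : Set S.Func) (hF : ∀ f, f ∈ F) (t : Term S) :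
    t.isGround → t.isNameOf F := by
  induction t with
  | var x => intro h; exact h
  | func f ts ih => intro h; exact ⟨hF f, fun i => ih i (h i)⟩

theorem sat_rule_iff {S : Sig} (X : Sem) (P : Program S)
    (hground : progGround P) (hfull : fullSig P) (w : Interp S) (T : Set (Formula S))
    (hpia : ∀ φ ∈ PIAax P, ModelsF X w T φ) (r : Rule S) (hr : r ∈ P) :
    ModelsF X w T (embHP r) ↔ ModelsF X w T (embEB r) := by
  obtain ⟨hg, hv⟩ := hground r hr
  unfold ModelsF
  refine forall_congr' fun B => ?_
  unfold embHP embEB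
  rw [hv]
  simp only [uclosure, List.foldr_nil, sat_impOf]
  have key : ∀ b ∈ r.pos, Sat X w T b.toFormula B → Sat X w T (Formula.box b.toFormula) B := by
    intro b hb h
    have hbg : b.isGround := hg b (by simp [Rule.atoms, hb])
    have := hpia _ ⟨b, hfull.2 _, fun i => isNameOf_full _ hfull.1 _ (hbg i), rfl⟩ B
    simp only [Formula.imp, Sat.eq_3, Sat.eq_4] at this
    tauto
  have hbody : (∀ ψ ∈ bodyHP r, Sat X w T ψ B) ↔ (∀ ψ ∈ bodyE r, Sat X w T ψ B) := by
    simp only [bodyHP, bodyE, List.forall_mem_append, List.forall_mem_map]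
    refine and_congr_left fun _ => forall₂_congr fun b hb => ?_
    rw [Sat.eq_4]
    exact ⟨fun h => ⟨h, key b hb h⟩, fun h => h.1⟩
  rw [hbody]

theorem models_iff {S : Sig} (X : Sem) (P : Program S)
    (hground : progGround P) (hfull : fullSig P) (w : Interp S) (T : Set (Formula S)) :
    ModelsT X w T (tauHPv P) ↔ ModelsT X w T (tauEBv P) := by
  constructor
  · rintro h φ ((⟨r, hr, rfl⟩ | hp) | hu)
    · exact (sat_rule_iff X P hground hfull w T (fun ψ hψ => h ψ (Or.inl (Or.inr hψ))) r hr).1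
        (h _ (Or.inl (Or.inl ⟨r, hr, rfl⟩)))
    · exact h _ (Or.inl (Or.inr hp))
    · exact h _ (Or.inr hu)
  · rintro h φ ((⟨r, hr, rfl⟩ | hp) | hu)
    · exact (sat_rule_iff X P hground hfull w T (fun ψ hψ => h ψ (Or.inl (Or.inr hψ))) r hr).2
        (h _ (Or.inl (Or.inl ⟨r, hr, rfl⟩)))
    · exact h _ (Or.inl (Or.inr hp))
    · exact h _ (Or.inr hu)

/-- For every ground disjunctive program `P`, `τ^∨_HP(P)` and
`τ^∨_EB(P)` have exactly the same stableˣ expansions. -/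
theorem stmt8 {S : Sig} (X : Sem) (P : Program S)
    (hwf : progWf P) (hground : progGround P) (hfull : fullSig P) (hgood : goodSig P) :
    ExpEquiv X (tauHPv P) (tauEBv P) := by
  intro T
  unfold StableExp Entails
  simp only [models_iff X P hground hfull]
end
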